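/- Let p, q, s be distinct primes with p ≡ 5 (mod 8), q ≡ 3 (mod 8), s ≡ 3 (mod 4), (p/q) = (p/s) = 1. Then the 2-Sylow subgroup of the ideal class group of K = ℚ(√(2pq), √(ps)) is isomorphic to ℤ/2ℤ × ℤ/2ℤ. -/

import Mathlib

open NumberField

/-- The real biquadratic field `K = ℚ(√(2pq), √(ps))`, realized inside `ℂ`. -/
noncomputable def fieldK (p q s : ℕ) : IntermediateField ℚ ℂ :=
  IntermediateField.adjoin ℚ
    {((Real.sqrt (2 * p * q) : ℝ) : ℂ), ((Real.sqrt (p * s) : ℝ) : ℂ)}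

/-!
The genus characters `I ↦ (N I / p)` and `I ↦ (2 / N I)` are trivial on principal ideals, because a
norm from `K` is a norm from both `ℚ(√(2pq))` and `ℚ(√(2qs))`. By Dirichlet's theorem, primes
splitting completely in `K` take all four pairs of values, so the characters define a surjection
`Cl(K) → {±1}²`. It is an isomorphism on the Sylow 2-subgroup as soon as a class of order at most 2
in its kernel is trivial.

Let `I² = (α)` with both characters trivial on `I`. For each automorphism `φ ≠ 1` of `K` the
relative norm `α φ(α)` lies in the square class of a rational integer `m` in the fixed field of `φ`,
and `m` divides the discriminant. Triviality of the characters leaves few possibilities for `m`, and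
multiplying `α` by units of `K`, obtained as square roots of products of units of the quadratic
subfields, makes all three integers `m` equal to `±1`. Hilbert's Theorem 90 for the Klein four-group
then yields a rational `r ≠ 0` for which `r α` is a square. As `I² = (α)`, only ramified primes
divide `r` to an odd power, and those are units times squares in `K`. Hence `α` is a unit times a
square, and `I` is principal.
-/

namespace BiquadraticTwoClass

open scoped nonZeroDivisors

section ClassGroup

lemma nonempty_sylow_two_mulEquiv {G H : Type*} [CommGroup G] [Finite G] [Group H]
    (hH : ∀ h : H, h ^ 2 = 1) (χ : G →* H) (hsurj : Function.Surjective χ)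
    (hker : ∀ g, g ^ 2 = 1 → χ g = 1 → g = 1) (P : Sylow 2 G) :
    Nonempty ((P : Subgroup G) ≃* H) := by
  have hodd : Odd (P : Subgroup G).index := by
    rw [← Nat.not_even_iff_odd, even_iff_two_dvd]
    exact P.not_dvd_index
  have hpow (h : H) : h ^ (P : Subgroup G).index = h := by
    obtain ⟨k, hk⟩ := hodd
    rw [hk, pow_succ, pow_mul, hH, one_pow, one_mul]
  have descent (g : G) (hg : χ g = 1) (k : ℕ) : g ^ 2 ^ k = 1 → g = 1 := by
    induction k with
    | zero => simp
    | succ k ih => exact fun h ↦ ih (hker _ (by rw [← pow_mul, ← pow_succ, h]) (by simp [hg]))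
  refine ⟨MulEquiv.ofBijective (χ.comp (P : Subgroup G).subtype) ⟨?_, fun h ↦ ?_⟩⟩
  · refine (injective_iff_map_eq_one _).2 fun ⟨g, hg⟩ h ↦ Subtype.ext ?_
    obtain ⟨k, hk⟩ := P.2 ⟨g, hg⟩
    exact descent g h k (congrArg Subtype.val hk)
  · obtain ⟨g, rfl⟩ := hsurj h
    exact ⟨⟨g ^ (P : Subgroup G).index, Subgroup.pow_index_mem _ g⟩, by simp [hpow]⟩

lemma exists_mk0_eq_and_sup_eq_top {R : Type*} [CommRing R] [IsDedekindDomain R]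
    (C : ClassGroup R) {M : Ideal R} (hM : M ≠ 0) :
    ∃ I : (Ideal R)⁰, ClassGroup.mk0 I = C ∧ (I : Ideal R) ⊔ M = ⊤ := by
  obtain ⟨J, hJ⟩ := ClassGroup.mk0_surjective C⁻¹
  have hJ0 : (J : Ideal R) ≠ 0 := nonZeroDivisors.coe_ne_zero J
  rcases eq_or_ne M ⊤ with rfl | hMtop
  · obtain ⟨I, hI⟩ := ClassGroup.mk0_surjective C
    exact ⟨I, hI, sup_top_eq _⟩
  obtain ⟨a, ha⟩ := IsDedekindDomain.exists_sup_span_eq (I := (J : Ideal R) * M) (J := J)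
    Ideal.mul_le_left (mul_ne_zero hJ0 hM)
  obtain ⟨I, hI⟩ := Ideal.dvd_iff_le.2 (show Ideal.span {a} ≤ J from ha ▸ le_sup_right)
  have htop : M ⊔ I = ⊤ := mul_left_cancel₀ hJ0 <| by rw [Ideal.mul_sup, ← hI, ha, Ideal.mul_top]
  have hI0 : I ≠ 0 := by
    rintro rfl
    exact hMtop (by simpa using htop)
  refine ⟨⟨I, mem_nonZeroDivisors_of_ne_zero hI0⟩, ?_, by rwa [sup_comm]⟩
  have hprincipal : ClassGroup.mk0 (J * ⟨I, mem_nonZeroDivisors_of_ne_zero hI0⟩) = 1 :=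
    (ClassGroup.mk0_eq_one_iff _).2 ⟨a, hI.symm⟩
  rw [map_mul, hJ] at hprincipal
  exact (inv_mul_eq_one.1 hprincipal).symm

variable {K : Type*} [Field K] [NumberField K]

lemma absNorm_coprime_of_sup_eq_top {I : Ideal (𝓞 K)} {m : ℕ}
    (h : I ⊔ Ideal.span {(m : 𝓞 K)} = ⊤) : (Ideal.absNorm I).Coprime m := by
  refine Nat.Coprime.symm <| Nat.coprime_of_dvd fun l hl hlm hlI ↦ ?_
  obtain ⟨P, hP, hPl, hPI⟩ := Ideal.exists_isMaximal_dvd_of_dvd_absNorm' hl I hlI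
  have hlP : (l : 𝓞 K) ∈ P := by
    simpa using (hPl ▸ Ideal.mem_span_singleton_self _ : (l : ℤ) ∈ P.under ℤ)
  refine hP.ne_top (top_le_iff.1 (h ▸ sup_le (Ideal.le_of_dvd hPI) ?_))
  rw [Ideal.span_singleton_le_iff_mem]
  exact P.mem_of_dvd (Nat.cast_dvd_cast hlm) hlP

lemma exists_mk0_eq_and_absNorm_coprime (C : ClassGroup (𝓞 K)) {m : ℕ} (hm : m ≠ 0) :
    ∃ I : (Ideal (𝓞 K))⁰, ClassGroup.mk0 I = C ∧ (Ideal.absNorm (I : Ideal (𝓞 K))).Coprime m := by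
  obtain ⟨I, hIC, hI⟩ := exists_mk0_eq_and_sup_eq_top C
    (M := Ideal.span {(m : 𝓞 K)}) (by simpa using hm)
  exact ⟨I, hIC, absNorm_coprime_of_sup_eq_top hI⟩

lemma exists_classGroup_hom_eq_absNorm {M : Type*} [CommMonoid M] {m : ℕ} (hm : m ≠ 0) (f : ℕ →* M)
    (hf : ∀ x : 𝓞 K, (Ideal.absNorm (Ideal.span {x})).Coprime m →
      f (Ideal.absNorm (Ideal.span {x})) = 1) :
    ∃ χ : ClassGroup (𝓞 K) →* M, ∀ I : (Ideal (𝓞 K))⁰,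
      (Ideal.absNorm (I : Ideal (𝓞 K))).Coprime m →
        χ (ClassGroup.mk0 I) = f (Ideal.absNorm (I : Ideal (𝓞 K))) := by
  let N (I : (Ideal (𝓞 K))⁰) : ℕ := Ideal.absNorm (I : Ideal (𝓞 K))
  have hN (I J) : N (I * J) = N I * N J := map_mul _ _ _
  choose r hrC hr using fun C : ClassGroup (𝓞 K) ↦ exists_mk0_eq_and_absNorm_coprime C hm
  have f_eq_one {I} (hI : (N I).Coprime m) (hI1 : ClassGroup.mk0 I = 1) : f (N I) = 1 := by
    obtain ⟨x, hx⟩ := (ClassGroup.mk0_eq_one_iff I.2).1 hI1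
    have hx : (I : Ideal (𝓞 K)) = Ideal.span {x} := hx
    simpa only [N, hx] using hf x (by simpa only [N, hx] using hI)
  have f_congr {I J} (hI : (N I).Coprime m) (hJ : (N J).Coprime m)
      (hIJ : ClassGroup.mk0 I = ClassGroup.mk0 J) : f (N I) = f (N J) := by
    have cancel {I'} (hI' : (N I').Coprime m) (h : ClassGroup.mk0 I' = ClassGroup.mk0 I) :
        f (N I') * f (N (r (ClassGroup.mk0 I)⁻¹)) = 1 := by
      rw [← map_mul, ← hN]
      refine f_eq_one ?_ (by rw [map_mul, hrC, h, mul_inv_cancel])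
      exact hN _ _ ▸ Nat.Coprime.mul_left hI' (hr _)
    exact left_inv_eq_right_inv (cancel hI rfl) (mul_comm _ (f (N J)) ▸ cancel hJ hIJ.symm)
  refine ⟨⟨⟨fun C ↦ f (N (r C)), f_eq_one (hr 1) (hrC 1)⟩, fun C D ↦ ?_⟩,
    fun I hI ↦ f_congr (hr _) hI (hrC _)⟩
  rw [← map_mul, ← hN]
  refine f_congr (hr _) ?_ (by rw [map_mul, hrC, hrC, hrC])
  exact hN _ _ ▸ Nat.Coprime.mul_left (hr C) (hr D)

end ClassGroup

section NormForm

/-- `N` is a norm from the quadratic field `ℚ(√d)`. -/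
def IsQuadNorm (d : ℤ) (N : ℚ) : Prop :=
  ∃ u v : ℚ, N = u ^ 2 - d * v ^ 2

lemma exists_not_dvd_mul_sq_eq {l : ℤ} (hl : Prime l) {d : ℤ} (hd : l ∣ d) (hd2 : ¬ l ^ 2 ∣ d)
    {N w : ℤ} (hw : ¬ l ∣ w) (k : ℕ) {u v : ℤ} (h : N * (l ^ k * w) ^ 2 = u ^ 2 - d * v ^ 2) :
    ∃ w u v : ℤ, ¬ l ∣ w ∧ N * w ^ 2 = u ^ 2 - d * v ^ 2 := by
  induction k generalizing u v with
  | zero => exact ⟨w, u, v, hw, by simpa using h⟩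
  | succ k ih =>
    obtain ⟨e, rfl⟩ := hd
    obtain ⟨u, rfl⟩ : l ∣ u := hl.dvd_of_dvd_pow (n := 2)
      ⟨N * l * (l ^ k * w) ^ 2 + e * v ^ 2, by linear_combination -h⟩
    have hev : e * v ^ 2 = l * (u ^ 2 - N * (l ^ k * w) ^ 2) :=
      mul_left_cancel₀ hl.ne_zero (by linear_combination h)
    have he : ¬ l ∣ e := fun he ↦ hd2 (sq l ▸ mul_dvd_mul_left l he)
    obtain ⟨v, rfl⟩ : l ∣ v :=
      hl.dvd_of_dvd_pow ((hl.dvd_or_dvd (Dvd.intro _ hev.symm)).resolve_left he)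
    exact ih (u := u) (v := v) (mul_left_cancel₀ hl.ne_zero (by linear_combination hev))

lemma IsQuadNorm.exists_int {d N : ℤ} (h : IsQuadNorm d N) {l : ℤ} (hl : Prime l) (hd : l ∣ d)
    (hd2 : ¬ l ^ 2 ∣ d) : ∃ w u v : ℤ, ¬ l ∣ w ∧ N * w ^ 2 = u ^ 2 - d * v ^ 2 := by
  obtain ⟨u, v, h⟩ := h
  have hden : (u.den * v.den : ℤ) ≠ 0 :=
    mul_ne_zero (Int.natCast_ne_zero.2 u.den_nz) (Int.natCast_ne_zero.2 v.den_nz)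
  obtain ⟨w, hkw, hw⟩ :=
    (FiniteMultiplicity.of_prime_left hl hden).exists_eq_pow_mul_and_not_dvd
  refine exists_not_dvd_mul_sq_eq hl hd hd2 hw (multiplicity l (u.den * v.den))
    (u := u.num * v.den) (v := v.num * u.den) ?_
  have key : (N : ℚ) * (u.den * v.den) ^ 2 = (u.num * v.den) ^ 2 - d * (v.num * u.den) ^ 2 := by
    rw [h, ← Rat.mul_den_eq_num u, ← Rat.mul_den_eq_num v]
    ring
  rw [← hkw]
  exact_mod_cast key

lemma IsQuadNorm.legendreSym_eq_one {l : ℕ} [Fact l.Prime] {d N : ℤ} (h : IsQuadNorm d N)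
    (hd : (l : ℤ) ∣ d) (hd2 : ¬ (l : ℤ) ^ 2 ∣ d) (hN : ¬ (l : ℤ) ∣ N) : legendreSym l N = 1 := by
  obtain ⟨w, u, v, hw, e⟩ := h.exists_int (Nat.prime_iff_prime_int.1 Fact.out) hd hd2
  rw [← ZMod.intCast_zmod_eq_zero_iff_dvd] at hd hN hw
  have hmod : (N : ZMod l) * w ^ 2 = u ^ 2 := by
    simpa [hd] using congrArg (Int.cast : ℤ → ZMod l) e
  exact (legendreSym.eq_one_iff l hN).2 ⟨u / w, by field_simp; exact hmod⟩

lemma IsQuadNorm.emod_eight {d N : ℤ} (h : IsQuadNorm d N) (hd : d % 8 = 2) (hN : Odd N) :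
    N % 8 = 1 ∨ N % 8 = 7 := by
  obtain ⟨w, u, v, hw, e⟩ := h.exists_int Int.prime_two (by omega) (by omega)
  have sq_odd {x : ℤ} (hx : Odd x) : x ^ 2 % 8 = 1 := by
    have := Int.eight_dvd_sq_sub_one_of_odd hx
    omega
  have sq_mod (x : ℤ) : x ^ 2 % 4 = 0 ∨ x ^ 2 % 8 = 1 :=
    (Int.even_or_odd x).imp (fun hx ↦ Int.emod_eq_zero_of_dvd (pow_dvd_pow_of_dvd hx.two_dvd 2))
      sq_odd
  have hw : w ^ 2 % 8 = 1 := sq_odd (Int.not_even_iff_odd.1 (even_iff_two_dvd.not.2 hw))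
  have hNw : N * w ^ 2 % 8 = N % 8 := by rw [Int.mul_emod, hw]; simp
  have hdv : d * v ^ 2 % 8 = 2 * (v ^ 2 % 8) % 8 := by rw [Int.mul_emod, hd]
  have := sq_mod u
  have := sq_mod v
  rw [Int.odd_iff] at hN
  omega

lemma not_isSquare_ratCast {l : ℤ} (hl : Prime l) {N : ℤ} (h1 : l ∣ N) (h2 : ¬ l ^ 2 ∣ N) :
    ¬ IsSquare (N : ℚ) := by
  rw [Rat.isSquare_intCast_iff]
  rintro ⟨x, rfl⟩
  exact h2 (pow_dvd_pow_of_dvd (or_self_iff.1 (hl.dvd_or_dvd h1)) 2 |>.trans (sq x).dvd)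

lemma exists_squarefree_mul_sq {t : ℤ} (ht : t ≠ 0) :
    ∃ m b : ℤ, Squarefree m ∧ b ≠ 0 ∧ t = m * b ^ 2 := by
  obtain ⟨a, b, h, ha⟩ := Nat.sq_mul_squarefree t.natAbs
  have hb : (b : ℤ) ≠ 0 := by
    rintro hb
    rw [Int.natCast_eq_zero.1 hb] at h
    exact ht (Int.natAbs_eq_zero.1 (by simpa using h.symm))
  refine ⟨t.sign * a, b, ?_, hb, ?_⟩
  · rw [← Int.squarefree_natAbs, Int.natAbs_mul, Int.natAbs_sign_of_ne_zero ht, one_mul]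
    simpa using ha
  · conv_lhs => rw [← Int.sign_mul_natAbs t, ← h]
    push_cast
    ring

end NormForm

section Pell

lemma exists_mul_sq_of_coprime {m n d j : ℕ} (hmn : m.Coprime n) (hd : d ≠ 0)
    (h : m * n = d * j ^ 2) : ∃ a b u v : ℕ, a * b = d ∧ m = a * u ^ 2 ∧ n = b * v ^ 2 := by
  obtain ⟨a, b, ⟨U, rfl⟩, ⟨V, rfl⟩, rfl⟩ := exists_dvd_and_dvd_of_dvd_mul (Dvd.intro _ h.symm)
  have hUV : U * V = j ^ 2 := mul_left_cancel₀ hd (by rw [← h]; ring)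
  have hc : U.Coprime V := hmn.of_dvd (Nat.dvd_mul_left U a) (Nat.dvd_mul_left V b)
  obtain ⟨u, rfl⟩ := exists_eq_pow_of_mul_eq_pow (Nat.isUnit_iff.2 hc) hUV
  obtain ⟨v, rfl⟩ := exists_eq_pow_of_mul_eq_pow (Nat.isUnit_iff.2 hc.symm)
    ((mul_comm V _).trans hUV)
  exact ⟨a, b, u, v, rfl, rfl, rfl⟩

variable {d x y : ℕ} (h : x ^ 2 = d * y ^ 2 + 1)
include h

lemma exists_factorization_sub_two_of_even (hx : Even x) :
    ∃ a b u v : ℕ, a * b = d ∧ a * u ^ 2 = b * v ^ 2 + 2 := by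
  have hx0 : x ≠ 0 := by
    rintro rfl
    simp at h
  obtain ⟨k, rfl⟩ : ∃ k, x = 2 * k + 2 := by
    obtain ⟨k, rfl⟩ := hx
    exact ⟨k - 1, by omega⟩
  have hd : d ≠ 0 := by
    rintro rfl
    simp at h
  obtain ⟨a, b, u, v, hab, hu, hv⟩ := exists_mul_sq_of_coprime (m := 2 * k + 1 + 2)
    (n := 2 * k + 1) (j := y) (by simp) hd (by linarith)
  exact ⟨a, b, u, v, hab, by omega⟩

lemma exists_factorization_sub_one_of_odd (hd : ¬ 4 ∣ d) (hx : Odd x) :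
    ∃ a b u v : ℕ, a * b = d ∧ a * u ^ 2 = b * v ^ 2 + 1 ∧ x + 1 = 2 * (a * u ^ 2) := by
  obtain ⟨k, rfl⟩ := hx
  have hd0 : d ≠ 0 := by
    rintro rfl
    simp at hd
  have h4 : (2 * 2) ∣ d * y ^ 2 := ⟨k * (k + 1), by linarith⟩
  obtain ⟨j, rfl⟩ : 2 ∣ y := by
    by_contra hy
    have hc : Nat.Coprime 4 (y ^ 2) := ((Nat.Prime.coprime_iff_not_dvd Nat.prime_two).2 hy).pow 2 2
    exact hd (hc.dvd_of_dvd_mul_right h4)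
  obtain ⟨a, b, u, v, hab, hu, hv⟩ := exists_mul_sq_of_coprime (m := k + 1) (n := k) (j := j)
    (by simp) hd0 (by linarith)
  exact ⟨a, b, u, v, hab, by omega, by omega⟩

omit h in
/-- For even `x` the fundamental solution of `x² - d y² = 1` splits as `(x + 1)(x - 1) = d y²`, and
for odd `x` as `(x + 1)/2 * (x - 1)/2 = d (y/2)²`, where `a = 1` would be a smaller solution. -/
lemma exists_factorization_of_squarefree (hd : Squarefree d) (h1 : 1 < d) :
    ∃ a b u v : ℕ, a * b = d ∧
      ((a ≠ 1 ∧ a * u ^ 2 = b * v ^ 2 + 1) ∨ (Odd d ∧ a * u ^ 2 = b * v ^ 2 + 2)) := by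
  have hns : ¬ IsSquare (d : ℤ) := by
    rw [Int.isSquare_natCast_iff]
    rintro ⟨x, rfl⟩
    simp [Nat.isUnit_iff.1 (hd x dvd_rfl)] at h1
  obtain ⟨f, hf1, -, hmin⟩ := Pell.IsFundamental.exists_of_not_isSquare
    (Int.natCast_pos.2 (zero_lt_one.trans h1)) hns
  have hf : f.x.natAbs ^ 2 = d * f.y.natAbs ^ 2 + 1 := by
    zify
    simp only [sq_abs]
    linear_combination f.prop
  have hd4 : ¬ 4 ∣ d := fun h ↦ by simpa using hd 2 h
  rcases Nat.even_or_odd f.x.natAbs with hx | hx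
  · obtain ⟨a, b, u, v, hab, h2⟩ := exists_factorization_sub_two_of_even hf hx
    refine ⟨a, b, u, v, hab, Or.inr ⟨?_, h2⟩⟩
    have : Odd (d * f.y.natAbs ^ 2) := by
      rw [← Nat.not_even_iff_odd, ← Nat.even_add_one, ← hf]
      exact hx.pow_of_ne_zero two_ne_zero
    exact (Nat.odd_mul.1 this).1
  · obtain ⟨a, b, u, v, rfl, h2, hu⟩ := exists_factorization_sub_one_of_odd hf hd4 hx
    refine ⟨a, b, u, v, rfl, Or.inl ⟨?_, h2⟩⟩
    rintro rfl
    have hsol : (u : ℤ) ^ 2 - (1 * b : ℕ) * (v : ℤ) ^ 2 = 1 := by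
      zify at h2
      push_cast
      linear_combination h2
    have hu1 : 1 < u := by
      by_contra! hu1
      have := Nat.pow_le_pow_left hu1 2
      omega
    have := @hmin (.mk u v hsol) (by simpa using hu1)
    rw [Pell.Solution₁.x_mk] at this
    have hfu : f.x.natAbs ≤ u := by omega
    nlinarith
end Pell

section PrimeFactors

variable {a b n l m : ℕ}

lemma exists_eq_mul_of_mul_eq_prime_mul (hl : l.Prime) (h : a * b = l * n) :
    (∃ c, a = l * c ∧ c * b = n) ∨ ∃ c, b = l * c ∧ a * c = n := by
  rcases hl.dvd_mul.1 (Dvd.intro n h.symm) with ⟨c, rfl⟩ | ⟨c, rfl⟩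
  · exact Or.inl ⟨c, rfl, mul_left_cancel₀ hl.ne_zero (by rw [← h, mul_assoc])⟩
  · exact Or.inr ⟨c, rfl, mul_left_cancel₀ hl.ne_zero (by rw [← h, mul_left_comm])⟩

lemma eq_one_of_mul_prime (hm : m.Prime) (h : a * b = m) : (a = 1 ∧ b = m) ∨ (a = m ∧ b = 1) := by
  rcases Nat.prime_mul_iff.1 (h ▸ hm) with ⟨-, rfl⟩ | ⟨-, rfl⟩
  · exact Or.inr ⟨by simpa using h, rfl⟩
  · exact Or.inl ⟨rfl, by simpa using h⟩

lemma factors_of_mul_prime_prime (hl : l.Prime) (hm : m.Prime) (h : a * b = l * m) :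
    (a = 1 ∧ b = l * m) ∨ (a = l ∧ b = m) ∨ (a = m ∧ b = l) ∨ (a = l * m ∧ b = 1) := by
  rcases exists_eq_mul_of_mul_eq_prime_mul hl h with ⟨c, rfl, hc⟩ | ⟨c, rfl, hc⟩ <;>
  rcases eq_one_of_mul_prime hm hc with ⟨rfl, rfl⟩ | ⟨rfl, rfl⟩ <;> simp

end PrimeFactors

lemma squarefree_prime_mul_prime {l m : ℕ} (hl : l.Prime) (hm : m.Prime) (h : l ≠ m) :
    Squarefree (l * m) :=
  (Nat.squarefree_mul ((Nat.coprime_primes hl hm).2 h)).2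
    ⟨hl.prime.squarefree, hm.prime.squarefree⟩

lemma squarefree_two_mul_prime_mul_prime {l m : ℕ} (hl : l.Prime) (hm : m.Prime)
    (h : l ≠ m) (hl2 : l ≠ 2) (hm2 : m ≠ 2) : Squarefree (2 * (l * m)) := by
  have hc : Nat.Coprime 2 (l * m) := ((Nat.coprime_primes Nat.prime_two hl).2 hl2.symm).mul_right
    ((Nat.coprime_primes Nat.prime_two hm).2 hm2.symm)
  exact (Nat.squarefree_mul hc).2
    ⟨Nat.prime_two.prime.squarefree, squarefree_prime_mul_prime hl hm h⟩

lemma exists_factorization_two_mul_prime_mul_prime {l m : ℕ} (hl : l.Prime) (hm : m.Prime)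
    (h : l ≠ m) (hl2 : l ≠ 2) (hm2 : m ≠ 2) :
    ∃ a b u v : ℕ, a * b = 2 * (l * m) ∧ a ≠ 1 ∧ a * u ^ 2 = b * v ^ 2 + 1 := by
  obtain ⟨a, b, u, v, hab, ⟨ha, h⟩ | ⟨hodd, -⟩⟩ := exists_factorization_of_squarefree
    (squarefree_two_mul_prime_mul_prime hl hm h hl2 hm2)
    (by have := Nat.mul_pos hl.pos hm.pos; omega)
  · exact ⟨a, b, u, v, hab, ha, h⟩
  · exact absurd hodd (Nat.not_odd_iff_even.2 (even_two_mul _))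

section LegendreSymbol

variable (l : ℕ) [Fact l.Prime]

lemma natCast_zmod_ne_zero {m : ℕ} (hm : m.Prime) (h : l ≠ m) : ((m : ℤ) : ZMod l) ≠ 0 := by
  rw [Ne, ZMod.intCast_zmod_eq_zero_iff_dvd, Int.natCast_dvd_natCast,
    Nat.prime_dvd_prime_iff_eq Fact.out hm]
  exact h

variable {l} {a b c u v : ℕ} (h : a * u ^ 2 = b * v ^ 2 + c) (hc : ¬ l ∣ c)
include h hc

lemma legendreSym_eq_of_dvd_right (hb : l ∣ b) : legendreSym l a = legendreSym l c := by
  have hmod : (a * u ^ 2 : ZMod l) = c := by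
    simpa [(ZMod.natCast_eq_zero_iff b l).2 hb] using congrArg (Nat.cast : ℕ → ZMod l) h
  have hu : ((u : ℤ) : ZMod l) ≠ 0 := by
    intro hu
    rw [← ZMod.natCast_eq_zero_iff, ← hmod] at hc
    simp_all
  rw [← mul_one (legendreSym l a), ← legendreSym.sq_one' l hu, ← legendreSym.mul]
  exact congrArg (quadraticChar (ZMod l)) (by push_cast; exact hmod)

lemma neg_one_mul_legendreSym_eq_of_dvd_left (ha : l ∣ a) :
    legendreSym l (-1) * legendreSym l b = legendreSym l c := by
  have hmod : (-1 * b * v ^ 2 : ZMod l) = c := by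
    have := congrArg (Nat.cast : ℕ → ZMod l) h
    push_cast [(ZMod.natCast_eq_zero_iff a l).2 ha] at this
    linear_combination this
  have hv : ((v : ℤ) : ZMod l) ≠ 0 := by
    intro hv
    rw [← ZMod.natCast_eq_zero_iff, ← hmod] at hc
    simp_all
  calc legendreSym l (-1) * legendreSym l b = legendreSym l (-1 * b * v ^ 2) := by
        rw [legendreSym.mul, legendreSym.mul, legendreSym.sq_one' l hv, mul_one]
    _ = legendreSym l c := congrArg (quadraticChar (ZMod l)) (by
        simpa only [Int.cast_mul, Int.cast_neg, Int.cast_one, Int.cast_pow,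
          Int.cast_natCast] using hmod)

end LegendreSymbol

/-- The congruences and residue symbols prescribed for the primes defining `K`. -/
structure IsAdmissible (p q s : ℕ) : Prop where
  q_ne_s : q ≠ s
  p_mod : p % 8 = 5
  q_mod : q % 8 = 3
  s_mod : s % 4 = 3
  isSquare_q : IsSquare (p : ZMod q)
  isSquare_s : IsSquare (p : ZMod s)

namespace IsAdmissible

variable {p q s : ℕ} (H : IsAdmissible p q s)
include H

lemma p_ne_two : p ≠ 2 := by have := H.p_mod; omega
lemma q_ne_two : q ≠ 2 := by have := H.q_mod; omega
lemma s_ne_two : s ≠ 2 := by have := H.s_mod; omega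
lemma p_ne_q : p ≠ q := by have := H.p_mod; have := H.q_mod; omega
lemma p_ne_s : p ≠ s := by have := H.p_mod; have := H.s_mod; omega

lemma legendreSym_p_two [Fact p.Prime] : legendreSym p 2 = -1 := by
  rw [legendreSym.at_two H.p_ne_two, ZMod.χ₈_nat_eq_if_mod_eight]
  simp [H.p_mod, ← Nat.mod_mod_of_dvd p (show 2 ∣ 8 by simp)]

lemma legendreSym_p_neg_one [Fact p.Prime] : legendreSym p (-1) = 1 := by
  rw [legendreSym.at_neg_one H.p_ne_two, ZMod.χ₄_nat_one_mod_four]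
  have := H.p_mod
  omega

lemma legendreSym_q_two [Fact q.Prime] : legendreSym q 2 = -1 := by
  rw [legendreSym.at_two H.q_ne_two, ZMod.χ₈_nat_eq_if_mod_eight]
  simp [H.q_mod, ← Nat.mod_mod_of_dvd q (show 2 ∣ 8 by simp)]

lemma legendreSym_q_neg_one [Fact q.Prime] : legendreSym q (-1) = -1 := by
  rw [legendreSym.at_neg_one H.q_ne_two, ZMod.χ₄_nat_three_mod_four]
  have := H.q_mod
  omega

lemma legendreSym_s_neg_one [Fact s.Prime] : legendreSym s (-1) = -1 := by
  rw [legendreSym.at_neg_one H.s_ne_two, ZMod.χ₄_nat_three_mod_four H.s_mod]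

lemma legendreSym_q_p [Fact q.Prime] [Fact p.Prime] : legendreSym q p = 1 :=
  (legendreSym.eq_one_iff q (natCast_zmod_ne_zero q Fact.out H.p_ne_q.symm)).2
    (by exact_mod_cast H.isSquare_q)

lemma legendreSym_s_p [Fact s.Prime] [Fact p.Prime] : legendreSym s p = 1 :=
  (legendreSym.eq_one_iff s (natCast_zmod_ne_zero s Fact.out H.p_ne_s.symm)).2
    (by exact_mod_cast H.isSquare_s)

lemma legendreSym_p_q [Fact p.Prime] [Fact q.Prime] : legendreSym p q = 1 := by
  rw [← legendreSym.quadratic_reciprocity_one_mod_four (by have := H.p_mod; omega) H.q_ne_two,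
    H.legendreSym_q_p]

lemma legendreSym_p_s [Fact p.Prime] [Fact s.Prime] : legendreSym p s = 1 := by
  rw [← legendreSym.quadratic_reciprocity_one_mod_four (by have := H.p_mod; omega) H.s_ne_two,
    H.legendreSym_s_p]

lemma legendreSym_q_s [Fact q.Prime] [Fact s.Prime] : legendreSym q s = -legendreSym s q :=
  legendreSym.quadratic_reciprocity_three_mod_four H.s_mod (by have := H.q_mod; omega)

lemma s_mod_eight : s % 8 = 3 ∨ s % 8 = 7 := by have := H.s_mod; omega

lemma q_mul_s_mod_eight (h3 : s % 8 = 3) : q * s % 8 = 1 := by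
  simp [Nat.mul_mod, H.q_mod, h3]

lemma legendreSym_s_two [Fact s.Prime] : legendreSym s 2 = if s % 8 = 7 then 1 else -1 := by
  rw [legendreSym.at_two H.s_ne_two, ZMod.χ₈_nat_eq_if_mod_eight]
  rcases H.s_mod_eight with h | h <;> simp [h, ← Nat.mod_mod_of_dvd s (show 2 ∣ 8 by simp)]

variable [Fact p.Prime] [Fact q.Prime] [Fact s.Prime]

omit [Fact s.Prime] in
lemma exists_q_mul_sq_eq : ∃ u v : ℕ, q * u ^ 2 = 2 * p * v ^ 2 + 1 := by
  have hp : p.Prime := Fact.out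
  have hq : q.Prime := Fact.out
  obtain ⟨a, b, u, v, hab, ha, h⟩ := exists_factorization_two_mul_prime_mul_prime hp hq H.p_ne_q
    H.p_ne_two H.q_ne_two
  have hpb := legendreSym_eq_of_dvd_right h hp.not_dvd_one
  have hpa := neg_one_mul_legendreSym_eq_of_dvd_left h hp.not_dvd_one
  have hqb := legendreSym_eq_of_dvd_right h hq.not_dvd_one
  have hqa := neg_one_mul_legendreSym_eq_of_dvd_left h hq.not_dvd_one
  simp only [H.legendreSym_p_neg_one, H.legendreSym_q_neg_one] at hpa hqa
  rcases exists_eq_mul_of_mul_eq_prime_mul Nat.prime_two hab with ⟨c, rfl, hc⟩ | ⟨c, rfl, hc⟩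
  · rcases factors_of_mul_prime_prime hp hq hc with
      ⟨h1, h2⟩ | ⟨h1, h2⟩ | ⟨h1, h2⟩ | ⟨h1, h2⟩ <;> subst c b
    · simp [H.legendreSym_p_two] at hpb
    · simp [legendreSym.mul, H.legendreSym_q_two, H.legendreSym_q_p] at hqb
    · simp [legendreSym.mul, H.legendreSym_p_two, H.legendreSym_p_q] at hpb
    · exact absurd (hqa ⟨2 * p, by ring⟩) (by simp)
  · rcases factors_of_mul_prime_prime hp hq hc with
      ⟨h1, h2⟩ | ⟨h1, h2⟩ | ⟨h1, h2⟩ | ⟨h1, h2⟩ <;> subst c a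
    · simp at ha
    · simp [legendreSym.mul, H.legendreSym_p_two, H.legendreSym_p_q] at hpa
    · exact ⟨u, v, h⟩
    · simp [H.legendreSym_p_two] at hpa

omit [Fact q.Prime] in
lemma exists_p_mul_sq_eq : ∃ u v : ℕ, p * u ^ 2 = s * v ^ 2 + 1 := by
  have hp : p.Prime := Fact.out
  have hs : s.Prime := Fact.out
  obtain ⟨a, b, u, v, hab, ⟨ha, h⟩ | ⟨-, h⟩⟩ := exists_factorization_of_squarefree
    (squarefree_prime_mul_prime hp hs H.p_ne_s) (by nlinarith [hp.two_le, hs.two_le])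
  · have hsa := neg_one_mul_legendreSym_eq_of_dvd_left h hs.not_dvd_one
    simp only [H.legendreSym_s_neg_one] at hsa
    rcases factors_of_mul_prime_prime hp hs hab with
      ⟨h1, h2⟩ | ⟨h1, h2⟩ | ⟨h1, h2⟩ | ⟨h1, h2⟩ <;> subst a b
    · simp at ha
    · exact ⟨u, v, h⟩
    · simp [H.legendreSym_s_p] at hsa
    · simp at hsa
  · have hp2 : ¬ p ∣ 2 := (Nat.prime_dvd_prime_iff_eq hp Nat.prime_two).not.2 H.p_ne_two
    have hpb := legendreSym_eq_of_dvd_right h hp2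
    have hpa := neg_one_mul_legendreSym_eq_of_dvd_left h hp2
    simp only [H.legendreSym_p_neg_one, Nat.cast_ofNat, H.legendreSym_p_two] at hpa hpb
    rcases factors_of_mul_prime_prime hp hs hab with
      ⟨h1, h2⟩ | ⟨h1, h2⟩ | ⟨h1, h2⟩ | ⟨h1, h2⟩ <;> subst a b
    · simp at hpb
    · simp [H.legendreSym_p_s] at hpa
    · simp [H.legendreSym_p_s] at hpb
    · simp at hpa

omit [Fact p.Prime] in
/-- The conclusion covers `q s u² = 2 v² + 1` and `s u² = 2 q v² ± 1`. -/
lemma exists_s_mul_sq_eq : ∃ (g : ℕ) (h e u v : ℤ), (g = 1 ∨ g = q) ∧ g * h = 2 * q ∧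
    (e = 1 ∨ e = -1) ∧ (g * s % 8 = 1 ∨ g * s % 8 = 7) ∧ g * s * u ^ 2 = h * v ^ 2 + e := by
  have hq : q.Prime := Fact.out
  have hs : s.Prime := Fact.out
  obtain ⟨a, b, u, v, hab, ha, h⟩ := exists_factorization_two_mul_prime_mul_prime hq hs H.q_ne_s
    H.q_ne_two H.s_ne_two
  have hqb := legendreSym_eq_of_dvd_right h hq.not_dvd_one
  have hqa := neg_one_mul_legendreSym_eq_of_dvd_left h hq.not_dvd_one
  have hsb := legendreSym_eq_of_dvd_right h hs.not_dvd_one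
  have hsa := neg_one_mul_legendreSym_eq_of_dvd_left h hs.not_dvd_one
  simp only [H.legendreSym_q_neg_one, H.legendreSym_s_neg_one] at hqa hsa
  rcases exists_eq_mul_of_mul_eq_prime_mul Nat.prime_two hab with ⟨c, rfl, hc⟩ | ⟨c, rfl, hc⟩
  · rcases factors_of_mul_prime_prime hq hs hc with
      ⟨h1, h2⟩ | ⟨h1, h2⟩ | ⟨h1, h2⟩ | ⟨h1, h2⟩ <;> subst c b
    · simp [H.legendreSym_q_two] at hqb
    · have h1 : legendreSym s q = 1 := by simpa [H.legendreSym_q_s] using hqa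
      have h7 : s % 8 = 7 := by
        simpa [legendreSym.mul, h1, H.legendreSym_s_two] using hsb
      exact ⟨1, 2 * q, -1, v, u, by simp, by simp, by simp, by omega, by zify at h ⊢; linarith⟩
    · have h1 : legendreSym s q = 1 := by
        simpa [legendreSym.mul, H.legendreSym_q_two, H.legendreSym_q_s] using hqb
      simp [h1] at hsa
    · exact absurd (hqa ⟨2 * s, by ring⟩) (by simp)
  · rcases factors_of_mul_prime_prime hq hs hc with
      ⟨h1, h2⟩ | ⟨h1, h2⟩ | ⟨h1, h2⟩ | ⟨h1, h2⟩ <;> subst c a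
    · simp at ha
    · have h1 : legendreSym s q = 1 := by simpa using hsb
      simp [legendreSym.mul, H.legendreSym_q_two, H.legendreSym_q_s, h1] at hqa
    · have h1 : legendreSym s q = -1 := by
        simpa [H.legendreSym_q_s, neg_eq_iff_eq_neg] using hqb
      have h7 : s % 8 = 7 := by
        by_contra h7
        simp [legendreSym.mul, h1, H.legendreSym_s_two, h7] at hsa
      exact ⟨1, 2 * q, 1, u, v, by simp, by simp, by simp, by omega, by zify at h ⊢; linarith⟩
    · have h3 : s % 8 = 3 := H.s_mod_eight.resolve_right fun h7 ↦ by
        simp [H.legendreSym_s_two, h7] at hsa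
      exact ⟨q, 2, 1, u, v, by simp, by ring, by simp, .inl (H.q_mul_s_mod_eight h3),
        by zify at h; linarith⟩
end IsAdmissible

section QuadraticSubfields

variable {K : Type*} [Field K] [NumberField K] {σ τ φ ψ : K ≃ₐ[ℚ] K} {a b c d : ℤ} {A B C D : K}

/-- The automorphisms `φ` and `ψ` generate the Galois group of the field `K`, which is a Klein
four-group `{1, φ, ψ, φψ}`. Encoded elementwise, together with the product formula for the norm. -/
structure IsKleinPair (φ ψ : K ≃ₐ[ℚ] K) : Prop where
  left_left : ∀ x, φ (φ x) = x
  right_right : ∀ x, ψ (ψ x) = x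
  comm : ∀ x, φ (ψ x) = ψ (φ x)
  exists_rat : ∀ x, φ x = x → ψ x = x → ∃ r : ℚ, x = r
  norm_eq : ∀ x, (Algebra.norm ℚ x : K) = x * φ x * ψ (x * φ x)

/-- `D` is a square root of the rational integer `d` generating the fixed field of `φ`, a quadratic
subfield of `K` on which `ψ` induces the conjugation. -/
structure IsQuadratic (d : ℤ) (D : K) (φ ψ : K ≃ₐ[ℚ] K) : Prop extends IsKleinPair φ ψ where
  sq_eq : D ^ 2 = d
  ne_zero : D ≠ 0
  map_left : φ D = D
  map_right : ψ D = -D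

lemma exists_int_eq_of_isIntegral {r : ℚ} (h : IsIntegral ℤ (r : K)) : ∃ z : ℤ, r = z := by
  have hr : IsIntegral ℤ r := by
    rw [← isIntegral_algebraMap_iff (algebraMap ℚ K).injective]
    simpa using h
  exact (IsIntegrallyClosed.isIntegral_iff.1 hr).imp fun z hz ↦ by simpa using hz.symm

namespace IsQuadratic

lemma mul (hA : IsQuadratic a A σ τ) (hB : IsQuadratic b B τ σ) {g : ℤ} (hg : g ≠ 0)
    (h : a * b = c * g ^ 2) : IsQuadratic c (A * B / g) (σ * τ) σ where
  left_left x := by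
    rw [AlgEquiv.mul_apply, AlgEquiv.mul_apply, ← hA.comm, hA.left_left, hA.right_right]
  right_right := hA.left_left
  comm x := by rw [AlgEquiv.mul_apply, AlgEquiv.mul_apply, ← hA.comm]
  exists_rat x h1 h2 := by
    rw [AlgEquiv.mul_apply, hA.comm, h2] at h1
    exact hA.exists_rat x h2 h1
  norm_eq x := by
    rw [hA.norm_eq, AlgEquiv.mul_apply, map_mul, map_mul, hA.left_left, hA.comm]
    ring
  sq_eq := by
    have hgK : (g : K) ≠ 0 := by exact_mod_cast hg
    rw [div_pow, mul_pow, hA.sq_eq, hB.sq_eq, div_eq_iff (pow_ne_zero 2 hgK)]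
    exact_mod_cast h
  ne_zero := div_ne_zero (mul_ne_zero hA.ne_zero hB.ne_zero) (by exact_mod_cast hg)
  map_left := by
    simp only [AlgEquiv.mul_apply, map_div₀, map_mul, hA.map_left, hA.map_right, hB.map_left,
      hB.map_right, map_neg, map_intCast, neg_mul_neg]
  map_right := by
    simp only [map_div₀, map_mul, hA.map_left, hB.map_right, map_intCast]
    ring

variable (h : IsQuadratic d D φ ψ)
include h

lemma exists_eq_add_mul {x : K} (hx : φ x = x) :
    ∃ u v : ℚ, x = u + v * D ∧ ψ x = u - v * D := by
  have hD := h.ne_zero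
  obtain ⟨u, hu⟩ := h.exists_rat ((x + ψ x) / 2) (by simp [h.comm, hx, map_ofNat])
    (by simp [h.right_right, add_comm, map_ofNat])
  obtain ⟨v, hv⟩ := h.exists_rat ((x - ψ x) / (2 * D)) (by simp [h.comm, hx, h.map_left, map_ofNat])
    (by simp only [map_div₀, map_sub, map_mul, map_ofNat, h.right_right, h.map_right]
        field_simp
        ring)
  refine ⟨u, v, ?_, ?_⟩ <;> rw [← hu, ← hv] <;> field_simp <;> ring

lemma isQuadNorm {x : K} (hx : φ x = x) {N : ℚ} (hN : x * ψ x = N) : IsQuadNorm d N := by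
  obtain ⟨u, v, e1, e2⟩ := h.exists_eq_add_mul hx
  refine ⟨u, v, (algebraMap ℚ K).injective ?_⟩
  simp only [eq_ratCast]
  rw [← hN, e2, e1]
  push_cast
  rw [← h.sq_eq]
  ring

lemma map_mul_map_left (x : K) : φ (x * φ x) = x * φ x := by
  rw [map_mul, h.left_left, mul_comm]

lemma isQuadNorm_norm (x : K) : IsQuadNorm d (Algebra.norm ℚ x) :=
  h.isQuadNorm (h.map_mul_map_left x) (h.norm_eq x).symm

end IsQuadratic

lemma isSquare_rat_or_of_eq_sq (hA : IsQuadratic a A σ τ) (hB : IsQuadratic b B τ σ)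
    (hC : IsQuadratic c C (σ * τ) σ) {r : ℚ} {z : K} (h : (r : K) = z ^ 2) :
    IsSquare r ∨ IsSquare (a * r) ∨ IsSquare (b * r) ∨ IsSquare (c * r) := by
  have map_z (φ : K ≃ₐ[ℚ] K) : φ z = z ∨ φ z = -z :=
    sq_eq_sq_iff_eq_or_eq_neg.1 (by rw [← map_pow, ← h, map_ratCast])
  have isSquare_mul {D : K} {d : ℤ} (hD : D ^ 2 = d) (h1 : σ (D * z) = D * z)
      (h2 : τ (D * z) = D * z) : IsSquare (d * r) := by
    obtain ⟨w, hw⟩ := hA.exists_rat _ h1 h2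
    refine ⟨w, (algebraMap ℚ K).injective ?_⟩
    simp only [eq_ratCast]
    push_cast
    rw [← hw, h, ← hD]
    ring
  have map_C : τ C = -C := by
    have := congrArg σ hC.map_left
    rwa [AlgEquiv.mul_apply, hA.left_left, hC.map_right] at this
  rcases map_z σ with h1 | h1 <;> rcases map_z τ with h2 | h2
  · exact .inl (by simpa using isSquare_mul (D := 1) (d := 1) (by simp) (by simpa) (by simpa))
  · exact .inr (.inl (isSquare_mul hA.sq_eq (by simp [h1, hA.map_left])
      (by simp [h2, hA.map_right])))
  · exact .inr (.inr (.inl (isSquare_mul hB.sq_eq (by simp [h1, hB.map_right])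
      (by simp [h2, hB.map_left]))))
  · exact .inr (.inr (.inr (isSquare_mul hC.sq_eq (by simp [h1, hC.map_right])
      (by simp [h2, map_C]))))

lemma isSquare_rat_of_eq_sq (hA : IsQuadratic a A σ τ) (hB : IsQuadratic b B τ σ)
    (hC : IsQuadratic c C (σ * τ) σ) {l k : ℤ} (hl : Prime l) (hk : Prime k) (hla : l ∣ a)
    (hla2 : ¬ l ^ 2 ∣ a) (hlb : l ∣ b) (hlb2 : ¬ l ^ 2 ∣ b) (hkc : k ∣ c) (hkc2 : ¬ k ^ 2 ∣ c)
    {N : ℤ} (hlN : ¬ l ∣ N) (hkN : ¬ k ∣ N) {z : K} (h : (N : K) = z ^ 2) :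
    IsSquare (N : ℚ) := by
  have not_isSquare {l d : ℤ} (hl : Prime l) (hd : l ∣ d) (hd2 : ¬ l ^ 2 ∣ d) (hN : ¬ l ∣ N) :
      ¬ IsSquare ((d : ℚ) * (N : ℚ)) := by
    rw [← Int.cast_mul]
    exact not_isSquare_ratCast hl (hd.mul_right N)
      fun h ↦ hd2 (hl.pow_dvd_of_dvd_mul_right 2 hN h)
  rcases isSquare_rat_or_of_eq_sq hA hB hC (r := N) (by exact_mod_cast h) with h | h | h | h
  · exact h
  · exact absurd h (not_isSquare hl hla hla2 hlN)
  · exact absurd h (not_isSquare hl hlb hlb2 hlN)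
  · exact absurd h (not_isSquare hk hkc hkc2 hkN)

end QuadraticSubfields

section UnramifiedPrimes

variable {K : Type*} [Field K] {l : ℤ} {x y : K}

lemma isIntegral_sq_div_mul (hx : IsIntegral ℤ x) (hy : IsIntegral ℤ (y ^ 2 / l)) :
    IsIntegral ℤ ((x * y) ^ 2 / l) := by
  rw [mul_pow, mul_div_assoc]
  exact (hx.pow 2).mul hy

variable [NumberField K] {σ τ φ ψ : K ≃ₐ[ℚ] K} {a b d : ℤ} {A B D : K}

lemma isIntegral_sq_div_add (hx : IsIntegral ℤ (x ^ 2 / l)) (hy : IsIntegral ℤ (y ^ 2 / l)) :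
    IsIntegral ℤ ((x + y) ^ 2 / l) := by
  have hxy : IsIntegral ℤ (x * y / l) :=
    .of_pow two_pos <| by
      rw [show (x * y / l) ^ 2 = x ^ 2 / l * (y ^ 2 / l) by ring]
      exact hx.mul hy
  rw [show (x + y) ^ 2 / l = x ^ 2 / l + y ^ 2 / l + (x * y / l + x * y / l) by ring]
  exact (hx.add hy).add (hxy.add hxy)

lemma isIntegral_sq_div_map (φ : K ≃ₐ[ℚ] K) (hx : IsIntegral ℤ (x ^ 2 / l)) :
    IsIntegral ℤ (φ x ^ 2 / l) := by
  simpa using map_isIntegral_int φ hx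

lemma isIntegral_sq_div_sub (hx : IsIntegral ℤ (x ^ 2 / l)) (hy : IsIntegral ℤ (y ^ 2 / l)) :
    IsIntegral ℤ ((x - y) ^ 2 / l) := by
  simpa [sub_eq_add_neg] using isIntegral_sq_div_add hx (y := -y) (by simpa using hy)

lemma isIntegral_of_sq_div (hl : Prime l) (hx : IsIntegral ℤ (x ^ 2 / l)) : IsIntegral ℤ x := by
  have hlK : (l : K) ≠ 0 := Int.cast_ne_zero.2 hl.ne_zero
  refine .of_pow two_pos ?_
  simpa [hlK] using hx.mul (isIntegral_algebraMap (R := ℤ) (A := K) (x := l))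

lemma isIntegral_ratCast_div_of_sq_div (hl : Prime l) {r : ℚ}
    (h : IsIntegral ℤ ((r : K) ^ 2 / l)) : IsIntegral ℤ ((r : K) / l) := by
  obtain ⟨z, rfl⟩ := exists_int_eq_of_isIntegral (isIntegral_of_sq_div hl h)
  obtain ⟨w, hw⟩ := exists_int_eq_of_isIntegral (K := K) (r := (z ^ 2 / l : ℚ)) (by simpa using h)
  obtain ⟨t, rfl⟩ : l ∣ z := hl.dvd_of_dvd_pow (n := 2) ⟨w, by
    rw [div_eq_iff (Int.cast_ne_zero.2 hl.ne_zero), mul_comm] at hw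
    exact_mod_cast hw⟩
  have hlK : (l : K) ≠ 0 := Int.cast_ne_zero.2 hl.ne_zero
  simpa [hlK] using isIntegral_algebraMap (R := ℤ) (A := K) (x := t)

lemma isIntegral_div_of_add_of_mul_sub (hl : Prime l) (hld : ¬ l ∣ 2 * d) (hD : IsIntegral ℤ D)
    (hd : D ^ 2 = d) (hx : IsIntegral ℤ x) (hadd : IsIntegral ℤ ((x + y) / l))
    (hsub : IsIntegral ℤ (D * (x - y) / l)) : IsIntegral ℤ (x / l) := by
  obtain ⟨u, v, huv⟩ := (Prime.coprime_iff_not_dvd hl).2 hld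
  have h_int (z : ℤ) : IsIntegral ℤ (z : K) := isIntegral_algebraMap (R := ℤ) (A := K) (x := z)
  have hlK : (l : K) ≠ 0 := Int.cast_ne_zero.2 hl.ne_zero
  have huv : (u * l + v * (2 * d) : K) = 1 := by exact_mod_cast huv
  have h2d : IsIntegral ℤ (2 * d * x / l) := by
    have e : 2 * d * x / l = d * ((x + y) / l) + D * (D * (x - y) / l) := by
      rw [← hd]
      ring
    exact e ▸ ((h_int d).mul hadd).add (hD.mul hsub)
  have e : x / l = u * x + v * (2 * d * x / l) := by
    field_simp
    linear_combination -x * huv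
  exact e ▸ ((h_int u).mul hx).add ((h_int v).mul h2d)

namespace IsQuadratic

lemma isIntegral (h : IsQuadratic d D φ ψ) : IsIntegral ℤ D :=
  .of_pow two_pos (h.sq_eq ▸ isIntegral_algebraMap (R := ℤ) (A := K) (x := d))

lemma isIntegral_div_of_sq_div_of_map_eq (h : IsQuadratic d D φ ψ) (hl : Prime l)
    (hld : ¬ l ∣ 2 * d) (hφ : φ x = x) (hx : IsIntegral ℤ (x ^ 2 / l)) :
    IsIntegral ℤ (x / l) := by
  have hψ := isIntegral_sq_div_map ψ hx
  obtain ⟨r, hr⟩ := h.exists_rat (x + ψ x) (by simp [h.comm, hφ])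
    (by simp [h.right_right, add_comm])
  obtain ⟨t, ht⟩ := h.exists_rat (D * (x - ψ x)) (by simp [h.comm, hφ, h.map_left])
    (by simp only [map_mul, map_sub, h.right_right, h.map_right]; ring)
  refine isIntegral_div_of_add_of_mul_sub hl hld h.isIntegral h.sq_eq
    (isIntegral_of_sq_div hl hx) (y := ψ x) ?_ ?_
  · rw [hr]
    exact isIntegral_ratCast_div_of_sq_div hl (hr ▸ isIntegral_sq_div_add hx hψ)
  · rw [ht]
    exact isIntegral_ratCast_div_of_sq_div hl
      (ht ▸ isIntegral_sq_div_mul h.isIntegral (isIntegral_sq_div_sub hx hψ))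

lemma isIntegral_div_of_sq_div (hA : IsQuadratic a A σ τ) (hB : IsQuadratic b B τ σ)
    (hl : Prime l) (hla : ¬ l ∣ 2 * a) (hlb : ¬ l ∣ 2 * b) (hx : IsIntegral ℤ (x ^ 2 / l)) :
    IsIntegral ℤ (x / l) := by
  have hσ := isIntegral_sq_div_map σ hx
  refine isIntegral_div_of_add_of_mul_sub hl hlb hB.isIntegral hB.sq_eq
    (isIntegral_of_sq_div hl hx) (y := σ x) ?_ ?_
  · exact hA.isIntegral_div_of_sq_div_of_map_eq hl hla (by simp [hA.left_left, add_comm])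
      (isIntegral_sq_div_add hx hσ)
  · exact hA.isIntegral_div_of_sq_div_of_map_eq hl hla
      (by simp only [map_mul, map_sub, hA.left_left, hB.map_right]; ring)
      (isIntegral_sq_div_mul hB.isIntegral (isIntegral_sq_div_sub hx hσ))

end IsQuadratic

/-- The principal fractional ideal generated by `x` is the square of a fractional ideal. -/
def IsIdealSq (x : K) : Prop :=
  ∃ I : FractionalIdeal (𝓞 K)⁰ K, I ^ 2 = .spanSingleton _ x

lemma isIdealSq_of_sq_eq_span {I : Ideal (𝓞 K)} {α : 𝓞 K} (h : I ^ 2 = Ideal.span {α}) :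
    IsIdealSq (α : K) :=
  ⟨I, by rw [← FractionalIdeal.coeIdeal_pow, h, FractionalIdeal.coeIdeal_span_singleton]⟩

lemma isIdealSq_map_of_sq_eq_span {I : Ideal (𝓞 K)} {α : 𝓞 K} (h : I ^ 2 = Ideal.span {α})
    (φ : K ≃ₐ[ℚ] K) : IsIdealSq (φ α) := by
  let f : 𝓞 K →+* 𝓞 K := RingOfIntegers.mapRingHom (φ : K →+* K)
  exact isIdealSq_of_sq_eq_span (I := I.map f) (α := f α)
    (by rw [← Ideal.map_pow, h, Ideal.map_span, Set.image_singleton])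

lemma IsIdealSq.mul (hx : IsIdealSq x) (hy : IsIdealSq y) : IsIdealSq (x * y) := by
  obtain ⟨I, hI⟩ := hx
  obtain ⟨J, hJ⟩ := hy
  exact ⟨I * J, by rw [mul_pow, hI, hJ, FractionalIdeal.spanSingleton_mul_spanSingleton]⟩

lemma IsIdealSq.inv (hx : IsIdealSq x) : IsIdealSq x⁻¹ := by
  obtain ⟨I, hI⟩ := hx
  exact ⟨I⁻¹, by rw [inv_pow, hI, FractionalIdeal.spanSingleton_inv]⟩

lemma isIdealSq_sq (x : K) : IsIdealSq (x ^ 2) :=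
  ⟨.spanSingleton _ x, FractionalIdeal.spanSingleton_pow _ _⟩

lemma mem_spanSingleton_iff_isIntegral_div (hy : y ≠ 0) :
    x ∈ FractionalIdeal.spanSingleton (𝓞 K)⁰ y ↔ IsIntegral ℤ (x / y) := by
  rw [FractionalIdeal.mem_spanSingleton, IsIntegralClosure.isIntegral_iff (A := 𝓞 K)]
  simp only [Algebra.smul_def, eq_div_iff hy]

lemma dvd_of_isIdealSq (hA : IsQuadratic a A σ τ) (hB : IsQuadratic b B τ σ) {m : ℤ}
    (hm : Squarefree m) (h : IsIdealSq (m : K)) (hl : Prime l) (hlm : l ∣ m) :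
    l ∣ 2 * a ∨ l ∣ 2 * b := by
  by_contra! hlab
  obtain ⟨I, hI⟩ := h
  obtain ⟨n, rfl⟩ := hlm
  have hlK : (l : K) ≠ 0 := Int.cast_ne_zero.2 hl.ne_zero
  have hmK : ((l * n : ℤ) : K) ≠ 0 := Int.cast_ne_zero.2 hm.ne_zero
  have hle : I ≤ .spanSingleton _ (l : K) := by
    intro x hx
    have hx2 : x ^ 2 ∈ I ^ 2 := by
      simpa only [sq] using FractionalIdeal.mul_mem_mul hx hx
    rw [hI, mem_spanSingleton_iff_isIntegral_div hmK] at hx2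
    refine (mem_spanSingleton_iff_isIntegral_div hlK).2
      (hA.isIntegral_div_of_sq_div hB hl hlab.1 hlab.2 ?_)
    have e : x ^ 2 / l = x ^ 2 / ((l * n : ℤ) : K) * n := by
      push_cast at hmK ⊢
      have := right_ne_zero_of_mul hmK
      field_simp
    exact e ▸ hx2.mul (isIntegral_algebraMap (R := ℤ) (A := K) (x := n))
  have hl2 : ((l * n : ℤ) : K) ∈ FractionalIdeal.spanSingleton (𝓞 K)⁰ ((l : K) ^ 2) := by
    rw [← FractionalIdeal.spanSingleton_pow, ← FractionalIdeal.spanSingleton_le_iff_mem, ← hI]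
    exact pow_le_pow_left' hle 2
  rw [mem_spanSingleton_iff_isIntegral_div (pow_ne_zero 2 hlK)] at hl2
  obtain ⟨t, ht⟩ := exists_int_eq_of_isIntegral (K := K) (r := (l * n : ℤ) / (l : ℚ) ^ 2)
    (by push_cast at hl2 ⊢; exact hl2)
  rw [div_eq_iff (pow_ne_zero 2 (Int.cast_ne_zero.2 hl.ne_zero))] at ht
  have ht : l * n = t * l ^ 2 := by exact_mod_cast ht
  exact hl.not_isUnit (hm l ⟨t, by rw [ht]; ring⟩)

end UnramifiedPrimes

section NormClasses

variable {K : Type*} [Field K] [NumberField K] {σ τ φ ψ : K ≃ₐ[ℚ] K} {a b d m m' : ℤ}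
  {A B D α β γ : K}

/-- The relative norm `α * φ α` lies in the square class of the rational integer `m` in the fixed
field of `φ`. -/
def HasNormClass (φ : K ≃ₐ[ℚ] K) (α : K) (m : ℤ) : Prop :=
  ∃ γ : K, φ γ = γ ∧ α * φ α = m * γ ^ 2

namespace HasNormClass

lemma mul (hα : HasNormClass φ α m) (hβ : HasNormClass φ β m') :
    HasNormClass φ (α * β) (m * m') := by
  obtain ⟨γ, hφγ, hγ⟩ := hα
  obtain ⟨δ, hφδ, hδ⟩ := hβ
  refine ⟨γ * δ, by rw [map_mul, hφγ, hφδ], ?_⟩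
  rw [map_mul, mul_mul_mul_comm, hγ, hδ]
  push_cast
  ring

lemma of_mul_sq {t : ℤ} (h : HasNormClass φ α (m * t ^ 2)) : HasNormClass φ α m := by
  obtain ⟨γ, hφγ, hγ⟩ := h
  refine ⟨t * γ, by rw [map_mul, map_intCast, hφγ], ?_⟩
  rw [hγ]
  push_cast
  ring

lemma mul_disc (h : HasNormClass φ α m) (hD : IsQuadratic d D φ ψ) :
    HasNormClass φ α (m * d) := by
  obtain ⟨γ, hφγ, hγ⟩ := h
  refine ⟨γ / D, by rw [map_div₀, hφγ, hD.map_left], ?_⟩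
  have := hD.ne_zero
  rw [hγ]
  push_cast
  rw [← hD.sq_eq]
  field_simp

end HasNormClass

lemma exists_squarefree_mul_sq_rat {t : ℚ} (ht : t ≠ 0) :
    ∃ (m : ℤ) (r : ℚ), Squarefree m ∧ r ≠ 0 ∧ t = m * r ^ 2 := by
  obtain ⟨m, b, hm, hb, h⟩ := exists_squarefree_mul_sq
    (mul_ne_zero (Rat.num_ne_zero.2 ht) (Int.natCast_ne_zero.2 t.den_nz))
  have hden : (t.den : ℚ) ≠ 0 := Nat.cast_ne_zero.2 t.den_nz
  refine ⟨m, b / t.den, hm, div_ne_zero (Int.cast_ne_zero.2 hb) hden, ?_⟩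
  have h : (t.num * t.den : ℚ) = m * b ^ 2 := by exact_mod_cast h
  rw [← Rat.mul_den_eq_num] at h
  field_simp
  linear_combination h

/-- Since `δ = α * φ α` has norm `n²` over `ℚ`, `(δ + n)² = δ (Tr δ + 2 n)`. -/
lemma IsQuadratic.exists_squarefree_hasNormClass (h : IsQuadratic d D φ ψ) (hα : α ≠ 0) {n : ℚ}
    (hn : Algebra.norm ℚ α = n ^ 2) : ∃ m : ℤ, Squarefree m ∧ HasNormClass φ α m := by
  set δ := α * φ α with hδ
  have hφδ : φ δ = δ := h.map_mul_map_left α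
  have hδψ : δ * ψ δ = (n : K) ^ 2 := by
    rw [← h.norm_eq, hn]
    push_cast
    rfl
  have hδ0 : δ ≠ 0 := mul_ne_zero hα ((map_ne_zero φ).2 hα)
  obtain ⟨N, hN, hδN⟩ : ∃ N : ℚ, N ^ 2 = n ^ 2 ∧ δ + N ≠ 0 := by
    by_contra! hall
    have h1 := hall n rfl
    have h2 := hall (-n) (neg_sq n)
    push_cast at h2
    exact hδ0 (by linear_combination (h1 + h2) / 2)
  have hN : (N : K) ^ 2 = (n : K) ^ 2 := by exact_mod_cast hN
  obtain ⟨t, ht⟩ := h.exists_rat (δ + ψ δ + 2 * N) (by simp [h.comm, hφδ, map_ofNat])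
    (by simp [h.right_right, add_comm, map_ofNat])
  have hsq : δ * t = (δ + N) ^ 2 := by linear_combination -δ * ht + hδψ - hN
  have ht0 : t ≠ 0 := by
    rintro rfl
    exact pow_ne_zero 2 hδN (by simpa using hsq.symm)
  obtain ⟨m, r, hm, hr, rfl⟩ := exists_squarefree_mul_sq_rat ht0
  have hmK : (m : K) ≠ 0 := Int.cast_ne_zero.2 hm.ne_zero
  have hrK : (r : K) ≠ 0 := Rat.cast_ne_zero.2 hr
  refine ⟨m, hm, (δ + N) / (m * r), by simp [hφδ], ?_⟩
  rw [div_pow, ← hsq, ← hδ]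
  push_cast
  field_simp

lemma IsQuadratic.exists_squarefree_hasNormClass_not_dvd (h : IsQuadratic d D φ ψ) (hα : α ≠ 0)
    {n : ℚ} (hn : Algebra.norm ℚ α = n ^ 2) {l : ℤ} (hl : Prime l) (hld : l ∣ d)
    (hld2 : ¬ l ^ 2 ∣ d) : ∃ m : ℤ, Squarefree m ∧ ¬ l ∣ m ∧ HasNormClass φ α m := by
  obtain ⟨m, hm, hmα⟩ := h.exists_squarefree_hasNormClass hα hn
  by_cases hlm : l ∣ m
  · obtain ⟨m, rfl⟩ := hlm
    have hmα := hmα.mul_disc h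
    obtain ⟨t, rfl⟩ := hld
    have hlm : ¬ l ∣ m := fun hlm ↦ hl.not_isUnit (hm l (mul_dvd_mul_left l hlm))
    have hlt : ¬ l ∣ t := fun hlt ↦ hld2 (sq l ▸ mul_dvd_mul_left l hlt)
    obtain ⟨m', b, hm', -, hb⟩ :=
      exists_squarefree_mul_sq (t := m * t) (mul_ne_zero (by rintro rfl; exact hlm (dvd_zero l))
        (by rintro rfl; exact hlt (dvd_zero l)))
    refine ⟨m', hm', fun hlm' ↦ ?_, .of_mul_sq (t := l * b) ?_⟩
    · exact (hl.dvd_or_dvd (hb ▸ hlm'.mul_right _)).elim hlm hlt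
    · rwa [show m' * (l * b) ^ 2 = l * m * (l * t) by linear_combination -l ^ 2 * hb]
  · exact ⟨m, hm, hlm, hmα⟩

lemma IsQuadratic.exists_mul_map_eq (h : IsQuadratic d D φ ψ) (hφ : φ γ = γ)
    (hγ : α * φ α = m * γ ^ 2) {n : ℤ} (hn : |Algebra.norm ℚ α| = n ^ 2) :
    ∃ ν : ℤ, (ν = 1 ∨ ν = -1) ∧ m * (γ * ψ γ) = (ν * n : ℤ) := by
  obtain ⟨r, hr⟩ := h.exists_rat (γ * ψ γ) (by rw [map_mul, h.comm, hφ])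
    (by rw [map_mul, h.right_right, mul_comm])
  have hnorm : Algebra.norm ℚ α = (m * r) ^ 2 := by
    refine (algebraMap ℚ K).injective ?_
    simp only [eq_ratCast]
    rw [h.norm_eq, hγ, map_mul, map_pow, map_intCast]
    push_cast
    rw [← hr]
    ring
  rw [hnorm, abs_of_nonneg (sq_nonneg _), sq_eq_sq_iff_eq_or_eq_neg] at hn
  rw [hr]
  rcases hn with hn | hn
  · exact ⟨1, .inl rfl, by rw [one_mul]; exact_mod_cast congrArg (Rat.cast : ℚ → K) hn⟩
  · exact ⟨-1, .inr rfl, by rw [neg_one_mul]; exact_mod_cast congrArg (Rat.cast : ℚ → K) hn⟩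

lemma IsQuadratic.isQuadNorm_of_mul_map_eq (h : IsQuadratic d D φ ψ) (hφ : φ γ = γ) {N : ℤ}
    (hN : m * (γ * ψ γ) = N) : IsQuadNorm d (N * m) := by
  refine h.isQuadNorm (x := m * γ) (by rw [map_mul, hφ, map_intCast]) ?_
  rw [map_mul, map_intCast]
  push_cast
  rw [← hN]
  ring

lemma HasNormClass.exists_isQuadNorm (hm : HasNormClass φ α m) (h : IsQuadratic d D φ ψ) {n : ℤ}
    (hn : |Algebra.norm ℚ α| = n ^ 2) :
    ∃ ν : ℤ, (ν = 1 ∨ ν = -1) ∧ IsQuadNorm d (ν * n * m : ℤ) := by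
  obtain ⟨γ, hφ, hγ⟩ := hm
  obtain ⟨ν, hν, hνn⟩ := h.exists_mul_map_eq hφ hγ hn
  exact ⟨ν, hν, by exact_mod_cast h.isQuadNorm_of_mul_map_eq hφ hνn⟩

lemma dvd_of_mul_mul_eq_sq (hm : Squarefree m) {l : ℤ} (hl : Prime l) (hlm : l ∣ m)
    (hld : ¬ l ∣ d) {y : ℤ} {r : ℚ} (h : m * d * y = r ^ 2) : l ∣ y := by
  have hr : IsIntegral ℤ r := by
    refine .of_pow two_pos (h ▸ ?_)
    exact_mod_cast isIntegral_algebraMap (R := ℤ) (A := ℚ) (x := m * d * y)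
  obtain ⟨w, rfl⟩ := IsIntegrallyClosed.isIntegral_iff.1 hr
  rw [eq_intCast] at h
  have h : m * d * y = w ^ 2 := by exact_mod_cast h
  have hlw : l ∣ w := hl.dvd_of_dvd_pow (h ▸ (hlm.mul_right d).mul_right y)
  obtain ⟨m, rfl⟩ := hlm
  have hlm : ¬ l ∣ m := fun hlm ↦ hl.not_isUnit (hm l (mul_dvd_mul_left l hlm))
  have hmd : l ∣ m * d * y := by
    obtain ⟨w, rfl⟩ := hlw
    exact ⟨w ^ 2, mul_left_cancel₀ hl.ne_zero (by linear_combination h)⟩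
  exact (hl.dvd_or_dvd hmd).resolve_left fun h ↦ (hl.dvd_or_dvd h).elim hlm hld

/-- With `N = m γ ψ(γ) = ± n`, both `Tr(α φ α) + 2 N = m (γ + ψ γ)²` and
`Tr(α φ α) - 2 N = m (γ - ψ γ)²` are divisible by `l` as soon as `l ∤ d`. -/
lemma HasNormClass.dvd_four_mul (h : IsQuadratic d D φ ψ) (hα : IsIntegral ℤ α) {n : ℤ}
    (hn : |Algebra.norm ℚ α| = n ^ 2) (hm : Squarefree m) (hmα : HasNormClass φ α m) {l : ℤ}
    (hl : Prime l) (hlm : l ∣ m) (hld : ¬ l ∣ d) : l ∣ 4 * n := by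
  obtain ⟨γ, hφ, hγ⟩ := hmα
  obtain ⟨ν, hν, hνn⟩ := h.exists_mul_map_eq hφ hγ hn
  obtain ⟨u, v, hu, hv⟩ := h.exists_eq_add_mul hφ
  have hν2 : ν * ν = 1 := by rcases hν with rfl | rfl <;> rfl
  have htrace : α * φ α + ψ (α * φ α) = ((2 * m * (u ^ 2 + d * v ^ 2) : ℚ) : K) := by
    rw [hγ, map_mul, map_pow, map_intCast, hv, hu]
    push_cast
    rw [← h.sq_eq]
    ring
  have hprod : (m * (u ^ 2 - d * v ^ 2) : ℚ) = (ν * n : ℤ) := by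
    refine (algebraMap ℚ K).injective ?_
    simp only [eq_ratCast]
    rw [Rat.cast_intCast, ← hνn, hv, hu]
    push_cast
    rw [← h.sq_eq]
    ring
  have h_int : IsIntegral ℤ (α * φ α) := hα.mul (map_isIntegral_int φ hα)
  obtain ⟨X, hX⟩ := exists_int_eq_of_isIntegral
    (htrace ▸ h_int.add (map_isIntegral_int ψ h_int))
  have hadd : l ∣ X + 2 * (ν * n) := dvd_of_mul_mul_eq_sq hm hl hlm (d := 1)
    (fun h ↦ hl.not_isUnit (isUnit_of_dvd_one h)) (r := 2 * m * u) (by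
      push_cast at hprod ⊢
      linear_combination -m * hX - 2 * m * hprod)
  have hsub : l ∣ X - 2 * (ν * n) := dvd_of_mul_mul_eq_sq hm hl hlm hld (r := 2 * m * d * v) (by
      push_cast at hprod ⊢
      linear_combination -m * d * hX + 2 * m * d * hprod)
  have := (dvd_sub hadd hsub).mul_left ν
  rwa [show ν * (X + 2 * (ν * n) - (X - 2 * (ν * n))) = 4 * n by
    linear_combination 4 * n * hν2] at this

end NormClasses

section IdealSquareRoot

variable {K : Type*} [Field K] [NumberField K] {σ τ φ ψ : K ≃ₐ[ℚ] K} {a b d m : ℤ} {A B D : K}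
  {I : Ideal (𝓞 K)} {α : 𝓞 K}

lemma abs_norm_eq_absNorm_sq (hI : I ^ 2 = Ideal.span {α}) :
    |Algebra.norm ℚ (α : K)| = (Ideal.absNorm I : ℤ) ^ 2 := by
  have h := congrArg Ideal.absNorm hI
  rw [map_pow, Ideal.absNorm_span_singleton] at h
  rw [← Algebra.coe_norm_int, ← Int.cast_abs, Int.abs_eq_natAbs, ← h]
  push_cast
  rfl

/-- Over a prime not dividing `2ab` the field is unramified, so that the square `(m)` of an ideal is
not exactly divisible by it; over a prime not dividing `2d` one compares norms from the fixed field
of `φ`. -/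
lemma HasNormClass.dvd_two_mul (hA : IsQuadratic a A σ τ) (hB : IsQuadratic b B τ σ)
    (h : IsQuadratic d D φ ψ) (hα : α ≠ 0) (hI : I ^ 2 = Ideal.span {α})
    (hn : IsCoprime (Ideal.absNorm I : ℤ) (2 * a * b)) (hm : Squarefree m)
    (hmα : HasNormClass φ (α : K) m) {l : ℤ} (hl : Prime l) (hlm : l ∣ m) : l ∣ 2 * d := by
  by_contra hld
  have hl4 : l ∣ 4 * Ideal.absNorm I := hmα.dvd_four_mul h α.isIntegral_coe
    (abs_norm_eq_absNorm_sq hI) hm hl hlm fun h ↦ hld (h.mul_left 2)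
  have hl2 : ¬ l ∣ 2 := fun h ↦ hld (h.mul_right d)
  have hln : l ∣ Ideal.absNorm I := (hl.dvd_or_dvd hl4).resolve_left fun h ↦
    hl2 (hl.dvd_of_dvd_pow (n := 2) (by norm_num [h]))
  have hab : l ∣ 2 * a * b := by
    obtain ⟨γ, -, hγ⟩ := hmα
    have hmI : IsIdealSq (m : K) := by
      have hγ0 : γ ≠ 0 := by
        rintro rfl
        simp [hα] at hγ
      have e : (m : K) = α * φ α * (γ ^ 2)⁻¹ := by
        rw [hγ]
        field_simp
      rw [e]
      exact ((isIdealSq_of_sq_eq_span hI).mul (isIdealSq_map_of_sq_eq_span hI φ)).mul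
        (isIdealSq_sq γ).inv
    rcases dvd_of_isIdealSq hA hB hm hmI hl hlm with h | h
    · exact h.mul_right b
    · exact h.trans ⟨a, by ring⟩
  exact hl.not_isUnit (hn.isUnit_of_dvd' hln hab)

end IdealSquareRoot

section NormClassRepresentatives

lemma exists_sign_mul_of_squarefree {l k : ℕ} (hl : l.Prime) (hk : k.Prime) (hlk : l ≠ k) {m : ℤ}
    (hm : Squarefree m) (h : ∀ r : ℕ, r.Prime → (r : ℤ) ∣ m → r = l ∨ r = k) :
    ∃ (e : ℤ) (M : ℕ), (e = 1 ∨ e = -1) ∧ m = e * M ∧ (M = 1 ∨ M = l ∨ M = k ∨ M = l * k) := by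
  have hdvd : m.natAbs ∣ l * k := by
    rw [← Nat.prod_primeFactors_of_squarefree (Int.squarefree_natAbs.2 hm),
      ← Finset.prod_pair (f := fun i ↦ i) hlk]
    refine Finset.prod_dvd_prod_of_subset _ _ _ fun r hr ↦ ?_
    simpa using h r (Nat.prime_of_mem_primeFactors hr)
      (Int.natCast_dvd.2 (Nat.dvd_of_mem_primeFactors hr))
  obtain ⟨b, hb⟩ := hdvd
  have hM := factors_of_mul_prime_prime hl hk hb.symm
  rcases Int.natAbs_eq m with hm | hm
  · exact ⟨1, m.natAbs, .inl rfl, by rwa [one_mul], by tauto⟩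
  · exact ⟨-1, m.natAbs, .inr rfl, by rwa [neg_one_mul], by tauto⟩

variable {K : Type*} [Field K] [NumberField K] {σ τ φ ψ : K ≃ₐ[ℚ] K} {a b d : ℤ} {A B C D : K}

lemma IsQuadratic.norm_eq_sq (h : IsQuadratic d D φ ψ) {l : ℕ} [Fact l.Prime] (hld : (l : ℤ) ∣ d)
    (hld2 : ¬ (l : ℤ) ^ 2 ∣ d) (hl : legendreSym l (-1) = -1) {n : ℤ} (hln : ¬ (l : ℤ) ∣ n) {x : K}
    (hn : |Algebra.norm ℚ x| = n ^ 2) : Algebra.norm ℚ x = n ^ 2 := by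
  refine (abs_eq (sq_nonneg _)).1 hn |>.resolve_right fun hneg ↦ ?_
  have hlp : Prime (l : ℤ) := Nat.prime_iff_prime_int.1 Fact.out
  have hnorm : IsQuadNorm d ((-1 * n ^ 2 : ℤ) : ℚ) := by
    have := h.isQuadNorm_norm x
    rw [hneg] at this
    simpa using this
  have := hnorm.legendreSym_eq_one hld hld2
    (by rw [neg_one_mul, dvd_neg]; exact fun h ↦ hln (hlp.dvd_of_dvd_pow h))
  rw [legendreSym.mul, hl, legendreSym.sq_one' l (by
    rwa [Ne, ZMod.intCast_zmod_eq_zero_iff_dvd])] at this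
  simp at this

variable {I : Ideal (𝓞 K)} {α : 𝓞 K}

lemma IsQuadratic.exists_sign_hasNormClass (hA : IsQuadratic a A σ τ) (hB : IsQuadratic b B τ σ)
    (h : IsQuadratic d D φ ψ) (hα : α ≠ 0) (hI : I ^ 2 = Ideal.span {α})
    (hnorm : Algebra.norm ℚ (α : K) = (Ideal.absNorm I : ℤ) ^ 2)
    (hn : IsCoprime (Ideal.absNorm I : ℤ) (2 * a * b)) {r l k : ℕ} (hr : r.Prime) (hl : l.Prime)
    (hk : k.Prime) (hlk : l ≠ k) (hrd : (r : ℤ) ∣ d) (hrd2 : ¬ (r : ℤ) ^ 2 ∣ d)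
    (hprimes : ∀ t : ℕ, t.Prime → (t : ℤ) ∣ 2 * d → t = r ∨ t = l ∨ t = k) :
    ∃ (e : ℤ) (M : ℕ), (e = 1 ∨ e = -1) ∧ (M = 1 ∨ M = l ∨ M = k ∨ M = l * k) ∧ ¬ r ∣ M ∧
      HasNormClass φ (α : K) (e * M) := by
  obtain ⟨m, hm, hrm, hmα⟩ := h.exists_squarefree_hasNormClass_not_dvd
    (RingOfIntegers.coe_ne_zero_iff.2 hα) (n := (Ideal.absNorm I : ℤ)) hnorm
    (Nat.prime_iff_prime_int.1 hr) hrd hrd2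
  obtain ⟨e, M, he, rfl, hM⟩ := exists_sign_mul_of_squarefree hl hk hlk hm fun t ht htm ↦
    (hprimes t ht (hmα.dvd_two_mul hA hB h hα hI hn hm (Nat.prime_iff_prime_int.1 ht)
      htm)).resolve_left (by rintro rfl; exact hrm htm)
  exact ⟨e, M, he, hM, fun hrM ↦ hrm ((Int.natCast_dvd_natCast.2 hrM).mul_left e), hmα⟩

end NormClassRepresentatives

section GenusTrivial

variable {K : Type*} [Field K] [NumberField K] {p q s : ℕ} {σ τ φ ψ : K ≃ₐ[ℚ] K} {d : ℤ}
  {A B C D : K} {I : Ideal (𝓞 K)} {α : 𝓞 K}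

/-- The field `K = ℚ(A, B)` of the theorem, with `A = √(2pq)`, `B = √(ps)` and `C = √(2qs)`
generating the fixed fields of `σ`, `τ` and `σ * τ`. -/
structure IsAdmissibleField (p q s : ℕ) (A B C : K) (σ τ : K ≃ₐ[ℚ] K) : Prop
    extends IsAdmissible p q s where
  prime_p : p.Prime
  prime_q : q.Prime
  prime_s : s.Prime
  quadratic_A : IsQuadratic (2 * p * q) A σ τ
  quadratic_B : IsQuadratic (p * s) B τ σ
  quadratic_C : IsQuadratic (2 * q * s) C (σ * τ) σ

/-- `I` is an ideal prime to `2pqs`, on which the two genus characters `(· / p)` and `(2 / ·)` are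
trivial, and whose square is generated by `α`. -/
structure IsGenusTrivialSqrt (p q s : ℕ) [Fact p.Prime] (I : Ideal (𝓞 K)) (α : 𝓞 K) : Prop where
  ne_zero : α ≠ 0
  sq_eq : I ^ 2 = Ideal.span {α}
  coprime : (Ideal.absNorm I).Coprime (2 * p * q * s)
  legendreSym_eq : legendreSym p (Ideal.absNorm I) = 1
  mod_eight : Ideal.absNorm I % 8 = 1 ∨ Ideal.absNorm I % 8 = 7

lemma not_sq_dvd_of_squarefree {l d : ℤ} (hl : Prime l) (hd : Squarefree d) : ¬ l ^ 2 ∣ d :=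
  fun h ↦ hl.not_isUnit (hd l (sq l ▸ h))

namespace IsGenusTrivialSqrt

variable [Fact p.Prime] (h : IsGenusTrivialSqrt p q s I α)
include h

lemma not_dvd {l : ℕ} (hl : l.Prime) (hdvd : l ∣ 2 * p * q * s) :
    ¬ (l : ℤ) ∣ (Ideal.absNorm I : ℤ) := by
  rw [Int.natCast_dvd_natCast]
  exact fun hlI ↦ hl.not_dvd_one (h.coprime ▸ Nat.dvd_gcd hlI hdvd)

lemma isCoprime :
    IsCoprime (Ideal.absNorm I : ℤ) (2 * (2 * p * q : ℤ) * (p * s : ℤ)) := by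
  have h1 : IsCoprime (Ideal.absNorm I : ℤ) (2 * p * q * s : ℤ) := by
    exact_mod_cast Nat.isCoprime_iff_coprime.2 h.coprime
  have h2 : IsCoprime (Ideal.absNorm I : ℤ) (2 * p : ℤ) :=
    h1.of_isCoprime_of_dvd_right ⟨q * s, by ring⟩
  convert h2.mul_right h1 using 1
  ring

end IsGenusTrivialSqrt

namespace IsAdmissibleField

variable (H : IsAdmissibleField p q s A B C σ τ)
include H

lemma squarefree_two_mul_p_mul_q : Squarefree (2 * p * q : ℤ) := by
  rw [mul_assoc]
  exact_mod_cast Int.squarefree_natCast.2 (squarefree_two_mul_prime_mul_prime H.prime_p H.prime_q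
    H.p_ne_q H.p_ne_two H.q_ne_two)

lemma squarefree_p_mul_s : Squarefree (p * s : ℤ) := by
  exact_mod_cast Int.squarefree_natCast.2 (squarefree_prime_mul_prime H.prime_p H.prime_s H.p_ne_s)

lemma squarefree_two_mul_q_mul_s : Squarefree (2 * q * s : ℤ) := by
  rw [mul_assoc]
  exact_mod_cast Int.squarefree_natCast.2 (squarefree_two_mul_prime_mul_prime H.prime_q H.prime_s
    H.q_ne_s H.q_ne_two H.s_ne_two)

lemma two_mul_q_mul_s_emod_eight : (2 * q * s : ℤ) % 8 = 2 := by
  have hqs : (q * s : ℤ) % 4 = 1 := by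
    rw [Int.mul_emod, show (q : ℤ) % 4 = 3 by have := H.q_mod; omega,
      show (s : ℤ) % 4 = 3 by have := H.s_mod; omega]
    rfl
  rw [mul_assoc]
  omega

variable [Fact p.Prime] (hα : IsGenusTrivialSqrt p q s I α)
include hα

lemma norm_eq_sq : Algebra.norm ℚ (α : K) = (Ideal.absNorm I : ℤ) ^ 2 := by
  have := Fact.mk H.prime_q
  exact H.quadratic_A.norm_eq_sq (l := q) ⟨2 * p, by ring⟩
    (not_sq_dvd_of_squarefree (Nat.prime_iff_prime_int.1 H.prime_q) H.squarefree_two_mul_p_mul_q)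
    H.legendreSym_q_neg_one (hα.not_dvd H.prime_q ⟨2 * p * s, by ring⟩)
    (abs_norm_eq_absNorm_sq hα.sq_eq)

lemma exists_sign_hasNormClass (h : IsQuadratic d D φ ψ) (hpd : (p : ℤ) ∣ d)
    (hpd2 : ¬ (p : ℤ) ^ 2 ∣ d) {k : ℕ} (hk : k.Prime) (hk2 : k ≠ 2)
    (hpk : legendreSym p k = 1)
    (hprimes : ∀ t : ℕ, t.Prime → (t : ℤ) ∣ 2 * d → t = p ∨ t = 2 ∨ t = k) :
    ∃ (e : ℤ) (M : ℕ), (e = 1 ∨ e = -1) ∧ (M = 1 ∨ M = k) ∧ HasNormClass φ (α : K) (e * M) := by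
  obtain ⟨e, M, he, hM, hpM, hmα⟩ := H.quadratic_A.exists_sign_hasNormClass H.quadratic_B h
    hα.ne_zero hα.sq_eq (H.norm_eq_sq hα) hα.isCoprime H.prime_p Nat.prime_two hk hk2.symm hpd
    hpd2 hprimes
  refine ⟨e, M, he, ?_, hmα⟩
  obtain ⟨ν, hν, hN⟩ := hmα.exists_isQuadNorm h (abs_norm_eq_absNorm_sq hα.sq_eq)
  have hpp : Prime (p : ℤ) := Nat.prime_iff_prime_int.1 H.prime_p
  have hpn := hα.not_dvd H.prime_p ⟨2 * q * s, by ring⟩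
  have hsymM : legendreSym p M = 1 := by
    have hsign {e : ℤ} (he : e = 1 ∨ e = -1) : legendreSym p e = 1 := by
      rcases he with rfl | rfl <;> simp [H.legendreSym_p_neg_one]
    have := hN.legendreSym_eq_one hpd hpd2 (by
      rcases he with rfl | rfl <;> rcases hν with rfl | rfl <;>
        simp [hpp.dvd_mul, hpn, Int.natCast_dvd_natCast, hpM])
    simpa [legendreSym.mul, hsign he, hsign hν, hα.legendreSym_eq] using this
  rcases hM with rfl | rfl | rfl | rfl
  · exact .inl rfl
  · simp [H.legendreSym_p_two] at hsymM
  · exact .inr rfl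
  · simp [legendreSym.mul, H.legendreSym_p_two, hpk] at hsymM

lemma exists_sign_hasNormClass_left :
    ∃ (e : ℤ) (M : ℕ), (e = 1 ∨ e = -1) ∧ (M = 1 ∨ M = q) ∧ HasNormClass σ (α : K) (e * M) := by
  have := Fact.mk H.prime_q
  refine H.exists_sign_hasNormClass hα H.quadratic_A ⟨2 * q, by ring⟩
    (not_sq_dvd_of_squarefree (Nat.prime_iff_prime_int.1 H.prime_p) H.squarefree_two_mul_p_mul_q)
    H.prime_q H.q_ne_two H.legendreSym_p_q fun t ht h ↦ ?_
  have h : t ∣ 2 * (2 * p * q) := by exact_mod_cast h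
  simp only [ht.dvd_mul, Nat.prime_dvd_prime_iff_eq ht, H.prime_p, H.prime_q, Nat.prime_two] at h
  tauto

lemma exists_sign_hasNormClass_right :
    ∃ (e : ℤ) (M : ℕ), (e = 1 ∨ e = -1) ∧ (M = 1 ∨ M = s) ∧ HasNormClass τ (α : K) (e * M) := by
  have := Fact.mk H.prime_s
  refine H.exists_sign_hasNormClass hα H.quadratic_B ⟨s, by ring⟩
    (not_sq_dvd_of_squarefree (Nat.prime_iff_prime_int.1 H.prime_p) H.squarefree_p_mul_s)
    H.prime_s H.s_ne_two H.legendreSym_p_s fun t ht h ↦ ?_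
  have h : t ∣ 2 * (p * s) := by exact_mod_cast h
  simp only [ht.dvd_mul, Nat.prime_dvd_prime_iff_eq ht, H.prime_p, H.prime_s, Nat.prime_two] at h
  tauto

lemma mod_eight_of_hasNormClass {e : ℤ} (he : e = 1 ∨ e = -1) {M : ℕ} (hM : Odd M)
    (h : HasNormClass (σ * τ) (α : K) (e * M)) : M % 8 = 1 ∨ M % 8 = 7 := by
  obtain ⟨ν, hν, hN⟩ := h.exists_isQuadNorm H.quadratic_C (abs_norm_eq_absNorm_sq hα.sq_eq)
  have hn := hα.mod_eight
  have hnM : Odd ((Ideal.absNorm I * M : ℕ) : ℤ) := by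
    rw [Int.odd_coe_nat, Nat.odd_mul, Nat.odd_iff]
    exact ⟨by omega, hM⟩
  have hN : IsQuadNorm (2 * q * s : ℤ) ((ν * e * (Ideal.absNorm I * M : ℕ) : ℤ)) := by
    convert hN using 2
    push_cast
    ring
  have hnM8 : Ideal.absNorm I * M % 8 = 1 ∨ Ideal.absNorm I * M % 8 = 7 := by
    have := hN.emod_eight H.two_mul_q_mul_s_emod_eight (by
      rcases he with rfl | rfl <;> rcases hν with rfl | rfl <;> simpa only [mul_neg, neg_mul,
        one_mul, mul_one, neg_neg, odd_neg] using hnM)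
    rcases he with rfl | rfl <;> rcases hν with rfl | rfl <;> omega
  rw [Nat.mul_mod] at hnM8
  rcases hn with hn | hn <;> rw [hn] at hnM8 <;> omega

lemma exists_sign_hasNormClass_mul {g : ℕ} (hg : g = 1 ∨ g = q)
    (hgs : g * s % 8 = 1 ∨ g * s % 8 = 7) : ∃ (e : ℤ) (M : ℕ), (e = 1 ∨ e = -1) ∧
      (M = 1 ∨ M = g * s) ∧ HasNormClass (σ * τ) (α : K) (e * M) := by
  obtain ⟨e, M, he, hM, h2M, hmα⟩ := H.quadratic_A.exists_sign_hasNormClass H.quadratic_B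
    H.quadratic_C hα.ne_zero hα.sq_eq (H.norm_eq_sq hα) hα.isCoprime Nat.prime_two H.prime_q
    H.prime_s H.q_ne_s ⟨q * s, by push_cast; ring⟩
    (not_sq_dvd_of_squarefree (Nat.prime_iff_prime_int.1 Nat.prime_two)
      H.squarefree_two_mul_q_mul_s) fun t ht h ↦ by
      have h : t ∣ 2 * (2 * q * s) := by exact_mod_cast h
      simp only [ht.dvd_mul, Nat.prime_dvd_prime_iff_eq ht, H.prime_q, H.prime_s,
        Nat.prime_two] at h
      tauto
  refine ⟨e, M, he, ?_, hmα⟩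
  have hM8 := H.mod_eight_of_hasNormClass hα he (Nat.odd_iff.2 (Nat.two_dvd_ne_zero.1 h2M)) hmα
  have hq := H.q_mod
  have hqs : s % 8 = 3 ∧ q * s % 8 = 1 ∨ s % 8 = 7 ∧ q * s % 8 = 5 := by
    rcases H.s_mod_eight with hs | hs <;> simp [Nat.mul_mod, hq, hs]
  rcases hM with hM | hM | hM | hM <;> rw [hM] at hM8
  · exact .inl hM
  · omega
  all_goals
    rcases hg with rfl | rfl
    · rw [one_mul] at hgs ⊢
      omega
    · omega

end IsAdmissibleField

end GenusTrivial

section Units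

variable {K : Type*} [Field K] {x y : K}

/-- Up to a square in `K`, the element `x` is a unit of the ring of integers. -/
def IsUnitMulSq (x : K) : Prop :=
  ∃ (η : (𝓞 K)ˣ) (y : K), x = (η : 𝓞 K) * y ^ 2

lemma isUnitMulSq_unit (η : (𝓞 K)ˣ) : IsUnitMulSq ((η : 𝓞 K) : K) := ⟨η, 1, by simp⟩

lemma isUnitMulSq_sq (x : K) : IsUnitMulSq (x ^ 2) := ⟨1, x, by simp⟩

namespace IsUnitMulSq

lemma mul (hx : IsUnitMulSq x) (hy : IsUnitMulSq y) : IsUnitMulSq (x * y) := by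
  obtain ⟨η, z, rfl⟩ := hx
  obtain ⟨ε, w, rfl⟩ := hy
  exact ⟨η * ε, z * w, by push_cast; ring⟩

lemma of_mul_left (hxy : IsUnitMulSq (x * y)) (hx : IsUnitMulSq x) (hx0 : x ≠ 0) :
    IsUnitMulSq y := by
  obtain ⟨η, z, h⟩ := hxy.mul hx
  refine ⟨η, z / x, ?_⟩
  field_simp
  linear_combination h

lemma intCast {P : ℕ → Prop} (hP : ∀ l : ℕ, l.Prime → P l → IsUnitMulSq (l : K)) {m : ℤ}
    (hm : m ≠ 0) (h : ∀ l : ℕ, l.Prime → (l : ℤ) ∣ m → P l) : IsUnitMulSq (m : K) := by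
  have key (n : ℕ) (hn : n ≠ 0) (h : ∀ l : ℕ, l.Prime → l ∣ n → P l) : IsUnitMulSq (n : K) := by
    induction n using Nat.recOnMul with
    | zero => exact absurd rfl hn
    | one => simpa using isUnitMulSq_sq (1 : K)
    | prime l hl => exact hP l hl (h l hl dvd_rfl)
    | mul a b iha ihb =>
      rw [Nat.cast_mul]
      exact (iha (left_ne_zero_of_mul hn) fun l hl hla ↦ h l hl (hla.mul_right b)).mul
        (ihb (right_ne_zero_of_mul hn) fun l hl hlb ↦ h l hl (hlb.mul_left a))
  have habs := key m.natAbs (Int.natAbs_ne_zero.2 hm) fun l hl hlm ↦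
    h l hl (Int.natCast_dvd.2 hlm)
  rcases Int.natAbs_eq m with hm | hm <;> rw [hm]
  · simpa using habs
  · simpa using (isUnitMulSq_unit (-1)).mul habs

end IsUnitMulSq

lemma exists_unit_eq_of_mul_eq_one (hx : IsIntegral ℤ x) (hy : IsIntegral ℤ y) (h : x * y = 1) :
    ∃ η : (𝓞 K)ˣ, ((η : 𝓞 K) : K) = x :=
  ⟨.mkOfMulEqOne ⟨x, hx⟩ ⟨y, hy⟩ (RingOfIntegers.ext h), rfl⟩

lemma exists_unit_eq_of_sq_eq {η : (𝓞 K)ˣ} (h : x ^ 2 = (η : 𝓞 K)) :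
    ∃ ξ : (𝓞 K)ˣ, ((ξ : 𝓞 K) : K) = x := by
  have hx : IsIntegral ℤ x := .of_pow two_pos (h ▸ RingOfIntegers.isIntegral_coe _)
  refine exists_unit_eq_of_mul_eq_one hx
    (y := x * (η⁻¹ : (𝓞 K)ˣ)) (hx.mul (RingOfIntegers.isIntegral_coe _)) ?_
  rw [← mul_assoc, ← sq, h]
  simp only [RingOfIntegers.coe_eq_algebraMap, ← map_mul, Units.mul_inv, map_one]

variable [NumberField K] {φ ψ : K ≃ₐ[ℚ] K} {d : ℤ} {D : K}

lemma IsQuadratic.exists_unit_mul_eq_sq (h : IsQuadratic d D φ ψ) {a b e u v : ℤ} (hab : a * b = d)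
    (he : e = 1 ∨ e = -1) (huv : a * u ^ 2 = b * v ^ 2 + e) :
    ∃ (F : K) (η : (𝓞 K)ˣ), φ F = F ∧ F * ψ F = e * a ∧ F ^ 2 = a * (η : 𝓞 K) := by
  have h_int (z : ℤ) : IsIntegral ℤ (z : K) := isIntegral_algebraMap (R := ℤ) (A := K) (x := z)
  have habK : (a * b : K) = D ^ 2 := by rw [h.sq_eq]; exact_mod_cast hab
  have huvK : (a * u ^ 2 : K) = b * v ^ 2 + e := by exact_mod_cast huv
  have he2 : (e ^ 2 : K) = 1 := by rcases he with rfl | rfl <;> simp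
  obtain ⟨η, hη⟩ := exists_unit_eq_of_mul_eq_one
    (x := ((a * u ^ 2 + b * v ^ 2 : ℤ) : K) + (2 * u * v : ℤ) * D)
    (y := ((a * u ^ 2 + b * v ^ 2 : ℤ) : K) - (2 * u * v : ℤ) * D)
    ((h_int _).add ((h_int _).mul h.isIntegral)) ((h_int _).sub ((h_int _).mul h.isIntegral)) (by
      push_cast
      linear_combination 4 * u ^ 2 * v ^ 2 * habK + (a * u ^ 2 - b * v ^ 2 + e) * huvK + he2)
  refine ⟨a * u + v * D, η, by simp [h.map_left], ?_, ?_⟩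
  · simp only [map_add, map_mul, map_intCast, h.map_right]
    linear_combination v ^ 2 * habK + a * huvK
  · rw [hη]
    push_cast
    linear_combination -v ^ 2 * habK

end Units

namespace IsAdmissibleField

variable {K : Type*} [Field K] [NumberField K] {p q s : ℕ} {σ τ : K ≃ₐ[ℚ] K} {A B C : K}
  (H : IsAdmissibleField p q s A B C σ τ)
include H

lemma exists_unit_sq_eq_q : ∃ (F : K) (η : (𝓞 K)ˣ), σ F = F ∧ F * τ F = q ∧
    F ^ 2 = q * (η : 𝓞 K) := by
  have := Fact.mk H.prime_p
  have := Fact.mk H.prime_q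
  obtain ⟨u, v, huv⟩ := H.exists_q_mul_sq_eq
  simpa using H.quadratic_A.exists_unit_mul_eq_sq (a := q) (b := 2 * p) (e := 1) (u := u) (v := v)
    (by ring) (.inl rfl) (by exact_mod_cast huv)

lemma exists_unit_sq_eq_p : ∃ (F : K) (η : (𝓞 K)ˣ), τ F = F ∧ F * σ F = p ∧
    F ^ 2 = p * (η : 𝓞 K) := by
  have := Fact.mk H.prime_p
  have := Fact.mk H.prime_s
  obtain ⟨u, v, huv⟩ := H.exists_p_mul_sq_eq
  simpa using H.quadratic_B.exists_unit_mul_eq_sq (a := p) (b := s) (e := 1) (u := u) (v := v)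
    (by ring) (.inl rfl) (by exact_mod_cast huv)

lemma exists_unit_sq_eq_s : ∃ (g : ℕ) (e : ℤ) (F : K) (η : (𝓞 K)ˣ), (g = 1 ∨ g = q) ∧
    (g * s % 8 = 1 ∨ g * s % 8 = 7) ∧ (e = 1 ∨ e = -1) ∧ σ (τ F) = F ∧ F * σ F = e * (g * s) ∧
    F ^ 2 = g * s * (η : 𝓞 K) := by
  have := Fact.mk H.prime_q
  have := Fact.mk H.prime_s
  obtain ⟨g, h, e, u, v, hg, hgh, he, hmod, huv⟩ := H.exists_s_mul_sq_eq
  obtain ⟨F, η, hF⟩ := H.quadratic_C.exists_unit_mul_eq_sq (a := g * s) (b := h)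
    (by linear_combination s * hgh) he huv
  exact ⟨g, e, F, η, hg, hmod, he, by simpa using hF⟩

lemma natCast_ne_zero :
    (p : K) ≠ 0 ∧ (q : K) ≠ 0 ∧ (s : K) ≠ 0 :=
  ⟨Nat.cast_ne_zero.2 H.prime_p.ne_zero, Nat.cast_ne_zero.2 H.prime_q.ne_zero,
    Nat.cast_ne_zero.2 H.prime_s.ne_zero⟩

lemma exists_unit_sq_eq_of_eq_one_or_eq {g : ℕ} (hg : g = 1 ∨ g = q) :
    ∃ (F : K) (η : (𝓞 K)ˣ), σ F = F ∧ F * τ F = g ∧ F ^ 2 = g * (η : 𝓞 K) := by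
  rcases hg with rfl | rfl
  · exact ⟨1, 1, by simp⟩
  · exact H.exists_unit_sq_eq_q

/-- With `F₁² = g η₁`, `F₂² = p η₂` and `F₃² = g s η₃` for units `ηᵢ` of the three quadratic
subfields, take `ξ = F₁ F₂ F₃ / (g B)`, a square root of `η₁ η₂ η₃`. -/
lemma exists_unit_hasNormClass : ∃ (g : ℕ) (e : ℤ) (ξ : (𝓞 K)ˣ), (g = 1 ∨ g = q) ∧
    (g * s % 8 = 1 ∨ g * s % 8 = 7) ∧ (e = 1 ∨ e = -1) ∧
    HasNormClass τ ((ξ : 𝓞 K) : K) (e * s) := by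
  obtain ⟨hp, hq, hs⟩ := H.natCast_ne_zero
  obtain ⟨g, e, F₃, η₃, hg, hmod, he, hστ₃, hF₃, hη₃⟩ := H.exists_unit_sq_eq_s
  obtain ⟨F₁, η₁, -, hF₁, hη₁⟩ := H.exists_unit_sq_eq_of_eq_one_or_eq hg
  obtain ⟨F₂, η₂, hτ₂, -, hη₂⟩ := H.exists_unit_sq_eq_p
  have hg0 : (g : K) ≠ 0 := by rcases hg with rfl | rfl <;> simp [hq]
  have hB0 := H.quadratic_B.ne_zero
  have hB : B ^ 2 = p * s := by simpa using H.quadratic_B.sq_eq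
  have hτB := H.quadratic_B.map_left
  have hτ₃ : τ F₃ = σ F₃ := by rw [← H.quadratic_A.left_left (τ F₃), hστ₃]
  obtain ⟨ξ, hξ⟩ := exists_unit_eq_of_sq_eq (x := F₁ * F₂ * F₃ / (g * B)) (η := η₁ * η₂ * η₃) (by
    simp only [div_pow, mul_pow, hη₁, hη₂, hη₃, hB, Units.val_mul, map_mul]
    field_simp)
  refine ⟨g, e, ξ, hg, hmod, he, F₂ / B, by rw [map_div₀, hτ₂, hτB], ?_⟩
  calc ((ξ : 𝓞 K) : K) * τ ((ξ : 𝓞 K) : K)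
      = (F₁ * τ F₁) * F₂ ^ 2 * (F₃ * σ F₃) / (g ^ 2 * B ^ 2) := by
        simp only [hξ, map_div₀, map_mul, map_natCast, hτ₂, hτ₃, hτB]
        ring
    _ = (e * s : ℤ) * (F₂ / B) ^ 2 := by
        rw [hF₁, hF₃]
        push_cast
        field_simp

end IsAdmissibleField

lemma not_dvd_of_eq_one_or_eq {t l m : ℕ} (ht : t.Prime) (hl : l.Prime) (htl : t ≠ l)
    (hm : m = 1 ∨ m = l) : ¬ t ∣ m := by
  rcases hm with rfl | rfl
  · exact ht.not_dvd_one
  · rwa [Nat.prime_dvd_prime_iff_eq ht hl]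

lemma not_isSquare_sign_mul {e : ℤ} (he : e = 1 ∨ e = -1) {l m : ℕ} (hl : l.Prime) (h : ¬ l ∣ m) :
    ¬ IsSquare ((e * (m * l : ℕ) : ℤ) : ℚ) := by
  refine not_isSquare_ratCast (Nat.prime_iff_prime_int.1 hl)
    ⟨e * m, by push_cast; ring⟩ fun hdvd ↦ h ?_
  have hdvd : l ^ 2 ∣ m * l := by
    rcases he with rfl | rfl <;>
      simpa only [one_mul, neg_one_mul, dvd_neg, ← Nat.cast_pow, Int.natCast_dvd_natCast] using hdvd
  exact Nat.dvd_of_mul_dvd_mul_right hl.pos (sq l ▸ hdvd)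

section Signs

variable {K : Type*} [Field K] [NumberField K] {p q s : ℕ} {σ τ : K ≃ₐ[ℚ] K} {A B C : K}

lemma HasNormClass.exists_mul_mul_eq_sq (h : IsKleinPair σ τ) {α : K} (hα : α ≠ 0) {n : ℚ}
    (hn : Algebra.norm ℚ α = n ^ 2) {m₁ m₂ m₃ : ℤ} (h₁ : HasNormClass σ α m₁)
    (h₂ : HasNormClass τ α m₂) (h₃ : HasNormClass (σ * τ) α m₃) :
    ∃ z : K, ((m₁ * m₂ * m₃ : ℤ) : K) = z ^ 2 := by
  obtain ⟨γ₁, -, h₁⟩ := h₁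
  obtain ⟨γ₂, -, h₂⟩ := h₂
  obtain ⟨γ₃, -, h₃⟩ := h₃
  have hγ {φ : K ≃ₐ[ℚ] K} {m : ℤ} {γ : K} (h : α * φ α = m * γ ^ 2) : γ ≠ 0 := by
    rintro rfl
    simp [hα] at h
  have hγ₁ := hγ h₁
  have hγ₂ := hγ h₂
  have hγ₃ := hγ h₃
  refine ⟨α * n / (γ₁ * γ₂ * γ₃), ?_⟩
  rw [div_pow, eq_div_iff (by positivity)]
  calc ((m₁ * m₂ * m₃ : ℤ) : K) * (γ₁ * γ₂ * γ₃) ^ 2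
      = m₁ * γ₁ ^ 2 * (m₂ * γ₂ ^ 2) * (m₃ * γ₃ ^ 2) := by push_cast; ring
    _ = α ^ 2 * (α * σ α * τ (α * σ α)) := by
      rw [← h₁, ← h₂, ← h₃, AlgEquiv.mul_apply, map_mul, h.comm]
      ring
    _ = (α * n) ^ 2 := by
      rw [← h.norm_eq, hn]
      push_cast
      ring

variable {I : Ideal (𝓞 K)} {α : 𝓞 K}

lemma IsGenusTrivialSqrt.unit_mul [Fact p.Prime] (h : IsGenusTrivialSqrt p q s I α) (ξ : (𝓞 K)ˣ) :
    IsGenusTrivialSqrt p q s I (ξ * α) where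
  ne_zero := mul_ne_zero ξ.ne_zero h.ne_zero
  sq_eq := by rw [h.sq_eq, Ideal.span_singleton_mul_left_unit ξ.isUnit]
  coprime := h.coprime
  legendreSym_eq := h.legendreSym_eq
  mod_eight := h.mod_eight

namespace IsAdmissibleField

variable [Fact p.Prime] (H : IsAdmissibleField p q s A B C σ τ)
  (hα : IsGenusTrivialSqrt p q s I α)
include H hα

lemma isSquare_of_hasNormClass {m₁ m₂ m₃ : ℤ} (h₁ : HasNormClass σ (α : K) m₁)
    (h₂ : HasNormClass τ (α : K) m₂) (h₃ : HasNormClass (σ * τ) (α : K) m₃)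
    (hp : ¬ (p : ℤ) ∣ m₁ * m₂ * m₃) (h2 : ¬ 2 ∣ m₁ * m₂ * m₃) :
    IsSquare ((m₁ * m₂ * m₃ : ℤ) : ℚ) := by
  have hpp : Prime (p : ℤ) := Nat.prime_iff_prime_int.1 H.prime_p
  obtain ⟨z, hz⟩ := h₁.exists_mul_mul_eq_sq H.quadratic_A.toIsKleinPair
    (RingOfIntegers.coe_ne_zero_iff.2 hα.ne_zero) (H.norm_eq_sq hα) h₂ h₃
  exact isSquare_rat_of_eq_sq H.quadratic_A H.quadratic_B H.quadratic_C hpp Int.prime_two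
    ⟨2 * q, by ring⟩ (not_sq_dvd_of_squarefree hpp H.squarefree_two_mul_p_mul_q) ⟨s, rfl⟩
    (not_sq_dvd_of_squarefree hpp H.squarefree_p_mul_s) ⟨q * s, by ring⟩
    (not_sq_dvd_of_squarefree Int.prime_two H.squarefree_two_mul_q_mul_s) hp h2 hz

lemma exists_sign_of_right {g : ℕ} (hg : g = 1 ∨ g = q) (hmod : g * s % 8 = 1 ∨ g * s % 8 = 7)
    {e₂ : ℤ} (he₂ : e₂ = 1 ∨ e₂ = -1) (h₂ : HasNormClass τ (α : K) e₂) :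
    ∃ e₁ e₃ : ℤ, (e₁ = 1 ∨ e₁ = -1) ∧ (e₃ = 1 ∨ e₃ = -1) ∧ HasNormClass σ (α : K) e₁ ∧
      HasNormClass (σ * τ) (α : K) e₃ := by
  obtain ⟨e₁, M₁, he₁, hM₁, h₁⟩ := H.exists_sign_hasNormClass_left hα
  obtain ⟨e₃, M₃, he₃, hM₃, h₃⟩ := H.exists_sign_hasNormClass_mul hα hg hmod
  have he : e₁ * e₂ * e₃ = 1 ∨ e₁ * e₂ * e₃ = -1 := by
    rcases he₁ with rfl | rfl <;> rcases he₂ with rfl | rfl <;> rcases he₃ with rfl | rfl <;> simp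
  have hdvd {t : ℕ} (ht : t.Prime) (htq : t ≠ q) (hts : t ≠ s) :
      ¬ (t : ℤ) ∣ e₁ * M₁ * e₂ * (e₃ * M₃) := by
    have hM₃ : ¬ t ∣ M₃ := by
      rcases hM₃ with rfl | rfl
      · exact ht.not_dvd_one
      · exact ht.not_dvd_mul (not_dvd_of_eq_one_or_eq ht H.prime_q htq hg)
          (not_dvd_of_eq_one_or_eq ht H.prime_s hts (.inr rfl))
    have hM := ht.not_dvd_mul (not_dvd_of_eq_one_or_eq ht H.prime_q htq hM₁) hM₃
    rw [show e₁ * M₁ * e₂ * (e₃ * M₃) = e₁ * e₂ * e₃ * (M₁ * M₃ : ℕ) by push_cast; ring]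
    rcases he with he | he <;> rw [he] <;>
      simpa only [one_mul, neg_one_mul, dvd_neg, Int.natCast_dvd_natCast] using hM
  have hsq := H.isSquare_of_hasNormClass hα h₁ h₂ h₃ (hdvd H.prime_p H.p_ne_q H.p_ne_s)
    (hdvd Nat.prime_two H.q_ne_two.symm H.s_ne_two.symm)
  rcases hM₃ with rfl | rfl
  · rcases hM₁ with rfl | rfl
    · exact ⟨e₁, e₃, he₁, he₃, by simpa using h₁, by simpa using h₃⟩
    · refine absurd ?_ (not_isSquare_sign_mul he H.prime_q H.prime_q.not_dvd_one)
      convert hsq using 2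
      push_cast
      ring
  · refine absurd ?_ (not_isSquare_sign_mul he (m := M₁ * g) H.prime_s ?_)
    · convert hsq using 2
      push_cast
      ring
    · exact H.prime_s.not_dvd_mul (not_dvd_of_eq_one_or_eq H.prime_s H.prime_q H.q_ne_s.symm hM₁)
        (not_dvd_of_eq_one_or_eq H.prime_s H.prime_q H.q_ne_s.symm hg)

lemma exists_hasNormClass_sign : ∃ (β : 𝓞 K) (e₁ e₂ e₃ : ℤ), IsGenusTrivialSqrt p q s I β ∧
    (e₁ = 1 ∨ e₁ = -1) ∧ (e₂ = 1 ∨ e₂ = -1) ∧ (e₃ = 1 ∨ e₃ = -1) ∧ HasNormClass σ (β : K) e₁ ∧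
    HasNormClass τ (β : K) e₂ ∧ HasNormClass (σ * τ) (β : K) e₃ := by
  obtain ⟨g, e, ξ, hg, hmod, he, hξ⟩ := H.exists_unit_hasNormClass
  obtain ⟨β, e₂, hβ, he₂, h₂⟩ : ∃ (β : 𝓞 K) (e₂ : ℤ), IsGenusTrivialSqrt p q s I β ∧
      (e₂ = 1 ∨ e₂ = -1) ∧ HasNormClass τ (β : K) e₂ := by
    obtain ⟨e₂, M, he₂, hM | hM, h₂⟩ := H.exists_sign_hasNormClass_right hα
    · exact ⟨α, e₂, hα, he₂, by simpa [hM] using h₂⟩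
    · refine ⟨ξ * α, e * e₂, hα.unit_mul ξ, ?_, .of_mul_sq (t := s) ?_⟩
      · rcases he with rfl | rfl <;> rcases he₂ with rfl | rfl <;> simp
      · rw [show e * e₂ * (s : ℤ) ^ 2 = e * s * (e₂ * M) by rw [hM]; ring]
        exact hξ.mul h₂
  obtain ⟨e₁, e₃, he₁, he₃, h₁, h₃⟩ := H.exists_sign_of_right hβ hg hmod he₂ h₂
  exact ⟨β, e₁, e₂, e₃, hβ, he₁, he₂, he₃, h₁, h₂, h₃⟩

end IsAdmissibleField

end Signs

lemma sign_eq_of_legendreSym {l : ℕ} [Fact l.Prime] (hl : legendreSym l (-1) = -1) {μ ν n : ℤ}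
    (hμ : μ = 1 ∨ μ = -1) (hν : ν = 1 ∨ ν = -1) (hμn : legendreSym l (μ * n) = 1)
    (hνn : legendreSym l (ν * n) = 1) : μ = ν := by
  rw [legendreSym.mul] at hμn hνn
  rcases hμ with rfl | rfl <;> rcases hν with rfl | rfl <;> simp_all

section Descent

variable {K : Type*} [Field K] [NumberField K] {σ τ φ ψ : K ≃ₐ[ℚ] K}

lemma IsKleinPair.exists_rat_mul_eq_add_sq (h : IsKleinPair σ τ) {α γ₁ γ₂ γ₃ : K} (hα : α ≠ 0)
    (hσ : σ γ₁ = γ₁) (hτ : τ γ₂ = γ₂) (hστ : σ (τ γ₃) = γ₃) (h₁ : γ₁ ^ 2 = α * σ α)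
    (h₂ : γ₂ ^ 2 = α * τ α) (h₃ : γ₁ * γ₂ = α * σ γ₃) :
    ∃ r : ℚ, r * α = (α + γ₁ + γ₂ + γ₃) ^ 2 := by
  have hσα : σ α = γ₁ ^ 2 / α := by rw [h₁, mul_div_cancel_left₀ _ hα]
  have hτα : τ α = γ₂ ^ 2 / α := by rw [h₂, mul_div_cancel_left₀ _ hα]
  have hγ₁ : γ₁ ≠ 0 := by rintro rfl; simp [hα] at h₁
  have hγ₂ : γ₂ ≠ 0 := by rintro rfl; simp [hα] at h₂
  have hσ₃ : σ γ₃ = γ₁ * γ₂ / α := by rw [h₃, mul_div_cancel_left₀ _ hα]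
  have hτ₃ : τ γ₃ = γ₁ * γ₂ / α := by rw [← hσ₃, ← h.left_left (τ γ₃), hστ]
  have hσ₂ : σ γ₂ = γ₁ * γ₃ / α := by
    have := congrArg σ h₃
    rw [map_mul, map_mul, hσ, h.left_left, hσα] at this
    refine mul_left_cancel₀ hγ₁ (this.trans ?_)
    ring
  have hτ₁ : τ γ₁ = γ₂ * γ₃ / α := by
    have := congrArg τ h₃
    rw [map_mul, map_mul, hτ, ← h.comm, hστ, hτα] at this
    refine mul_right_cancel₀ hγ₂ (this.trans ?_)
    ring
  have hσβ : σ (α + γ₁ + γ₂ + γ₃) = γ₁ / α * (α + γ₁ + γ₂ + γ₃) := by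
    simp only [map_add, hσ, hσα, hσ₂, hσ₃]
    field_simp
    ring
  have hτβ : τ (α + γ₁ + γ₂ + γ₃) = γ₂ / α * (α + γ₁ + γ₂ + γ₃) := by
    simp only [map_add, hτ, hτα, hτ₁, hτ₃]
    field_simp
    ring
  obtain ⟨r, hr⟩ := h.exists_rat ((α + γ₁ + γ₂ + γ₃) ^ 2 / α)
    (by rw [map_div₀, map_pow, hσβ, hσα]; field_simp)
    (by rw [map_div₀, map_pow, hτβ, hτα]; field_simp)
  exact ⟨r, by rw [← hr, div_mul_cancel₀ _ hα]⟩

/-- The `γᵢ / α` form a cocycle whose square is the coboundary of `α⁻¹`; `β` is a Hilbert 90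
average splitting it, with the signs of `γ₁` and `γ₂` chosen to keep it from vanishing. -/
lemma IsKleinPair.exists_rat_mul_eq_sq (h : IsKleinPair σ τ) {α γ₁ γ₂ γ₃ : K} (hα : α ≠ 0)
    (hσ : σ γ₁ = γ₁) (hτ : τ γ₂ = γ₂) (hστ : σ (τ γ₃) = γ₃) (h₁ : γ₁ ^ 2 = α * σ α)
    (h₂ : γ₂ ^ 2 = α * τ α) (h₃ : γ₁ * γ₂ = α * σ γ₃) :
    ∃ (r : ℚ) (β : K), β ≠ 0 ∧ r * α = β ^ 2 := by
  obtain ⟨r₁, hr₁⟩ := h.exists_rat_mul_eq_add_sq hα hσ hτ hστ h₁ h₂ h₃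
  obtain ⟨r₂, hr₂⟩ := h.exists_rat_mul_eq_add_sq (γ₁ := γ₁) (γ₂ := -γ₂) (γ₃ := -γ₃) hα
    (by simpa) (by simpa) (by simpa) (by simpa) (by simpa) (by simpa)
  obtain ⟨r₃, hr₃⟩ := h.exists_rat_mul_eq_add_sq (γ₁ := -γ₁) (γ₂ := γ₂) (γ₃ := -γ₃) hα
    (by simpa) (by simpa) (by simpa) (by simpa) (by simpa) (by simpa)
  obtain ⟨r₄, hr₄⟩ := h.exists_rat_mul_eq_add_sq (γ₁ := -γ₁) (γ₂ := -γ₂) (γ₃ := γ₃) hα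
    (by simpa) (by simpa) (by simpa) (by simpa) (by simpa) (by simpa)
  by_contra! hne
  have hβ₁ := not_imp_not.1 (hne r₁ _) hr₁
  have hβ₂ := not_imp_not.1 (hne r₂ _) hr₂
  have hβ₃ := not_imp_not.1 (hne r₃ _) hr₃
  have hβ₄ := not_imp_not.1 (hne r₄ _) hr₄
  have h4 : 4 * α = 0 := by linear_combination hβ₁ + hβ₂ + hβ₃ + hβ₄
  simp [hα] at h4

lemma HasNormClass.exists_mul_map_eq {e d n : ℤ} {D α : K} (hα : HasNormClass φ α e)
    (h : IsQuadratic d D φ ψ) (he : e = 1 ∨ e = -1) (hn : |Algebra.norm ℚ α| = n ^ 2) :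
    ∃ (γ : K) (μ : ℤ), (μ = 1 ∨ μ = -1) ∧ φ γ = γ ∧ α * φ α = e * γ ^ 2 ∧
      γ * ψ γ = (μ * n : ℤ) := by
  obtain ⟨γ, hφγ, hγ⟩ := hα
  obtain ⟨ν, hν, hνn⟩ := h.exists_mul_map_eq hφγ hγ hn
  rcases he with rfl | rfl
  · exact ⟨γ, ν, hν, hφγ, hγ, by simpa using hνn⟩
  · refine ⟨γ, -ν, by rcases hν with rfl | rfl <;> simp, hφγ, hγ, ?_⟩
    push_cast at hνn ⊢
    linear_combination -hνn

/-- The sign of `γ₃` is chosen so that `γ₁ γ₂ = α σ(γ₃)`, and the relations follow on applying `σ`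
and `τ` to this. -/
lemma IsKleinPair.exists_rat_mul_eq_sq_of_norm (h : IsKleinPair σ τ) {α γ₁ γ₂ γ₃ : K} {N : ℤ}
    (hN : N ≠ 0) {e₁ e₂ e₃ : ℤ} (he : e₁ * e₂ * e₃ = 1) (hα : α ≠ 0)
    (hσ : σ γ₁ = γ₁) (hτ : τ γ₂ = γ₂) (hστ : σ (τ γ₃) = γ₃) (h₁ : α * σ α = e₁ * γ₁ ^ 2)
    (h₂ : α * τ α = e₂ * γ₂ ^ 2) (h₃ : α * σ (τ α) = e₃ * γ₃ ^ 2) (hN₁ : γ₁ * τ γ₁ = N)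
    (hN₂ : γ₂ * σ γ₂ = N) (hN₃ : γ₃ * σ γ₃ = N) :
    ∃ (r : ℚ) (β : K), β ≠ 0 ∧ r * α = β ^ 2 := by
  have hNK : (N : K) ≠ 0 := Int.cast_ne_zero.2 hN
  have heK : (e₁ * e₂ * e₃ : K) = 1 := mod_cast he
  have he₃ : (e₃ ^ 2 : K) = 1 := mod_cast Int.isUnit_sq (.of_mul_eq_one_right _ he)
  have hσ₃ : σ α * τ α = e₃ * σ γ₃ ^ 2 := by
    have := congrArg σ h₃
    rwa [map_mul, h.left_left, map_mul, map_pow, map_intCast] at this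
  have hsq : (γ₁ * γ₂) ^ 2 = (α * σ γ₃) ^ 2 := by
    calc (γ₁ * γ₂) ^ 2 = e₃ * (e₁ * γ₁ ^ 2) * (e₂ * γ₂ ^ 2) := by
          linear_combination -(γ₁ * γ₂) ^ 2 * heK
      _ = e₃ * α ^ 2 * (σ α * τ α) := by rw [← h₁, ← h₂]; ring
      _ = (α * σ γ₃) ^ 2 := by rw [hσ₃]; linear_combination (α * σ γ₃) ^ 2 * he₃
  obtain ⟨δ, hδ, hστδ, hNδ⟩ : ∃ δ : K, γ₁ * γ₂ = α * σ δ ∧ σ (τ δ) = δ ∧ δ * σ δ = N := by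
    rcases sq_eq_sq_iff_eq_or_eq_neg.1 hsq with h | h
    · exact ⟨γ₃, h, hστ, hN₃⟩
    · exact ⟨-γ₃, by simpa using h, by simpa, by simpa⟩
  refine h.exists_rat_mul_eq_sq hα hσ hτ hστδ (mul_right_cancel₀ hNK ?_)
    (mul_right_cancel₀ hNK ?_) hδ
  · have := congrArg σ hδ
    rw [map_mul, map_mul, hσ, h.left_left] at this
    calc γ₁ ^ 2 * N = (γ₁ * γ₂) * (γ₁ * σ γ₂) := by rw [← hN₂]; ring
      _ = α * σ α * N := by rw [hδ, this, ← hNδ]; ring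
  · have := congrArg τ hδ
    rw [map_mul, map_mul, hτ, ← h.comm, hστδ] at this
    calc γ₂ ^ 2 * N = (γ₁ * γ₂) * (τ γ₁ * γ₂) := by rw [← hN₁]; ring
      _ = α * τ α * N := by rw [hδ, this, ← hNδ]; ring

end Descent

section PrincipalSquareRoots

variable {K : Type*} [Field K] [NumberField K] {p q s : ℕ}
  {σ τ φ ψ : K ≃ₐ[ℚ] K} {A B C : K}
  {I : Ideal (𝓞 K)} {α : 𝓞 K}

lemma exists_eq_span_of_isUnitMulSq (hI : I ^ 2 = Ideal.span {α}) (h : IsUnitMulSq (α : K)) :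
    ∃ y : 𝓞 K, I = Ideal.span {y} := by
  obtain ⟨η, z, hz⟩ := h
  have hz : z ^ 2 = algebraMap (𝓞 K) K ((η⁻¹ : (𝓞 K)ˣ) * α) := by
    rw [map_mul, ← RingOfIntegers.coe_eq_algebraMap α, hz, ← mul_assoc, ← map_mul, Units.inv_mul,
      map_one, one_mul]
  have h_int : IsIntegral ℤ z := .of_pow two_pos (hz ▸ RingOfIntegers.isIntegral_coe _)
  obtain ⟨y, rfl⟩ : ∃ y : 𝓞 K, algebraMap (𝓞 K) K y = z := ⟨⟨z, h_int⟩, rfl⟩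
  have hy : y ^ 2 = (η⁻¹ : (𝓞 K)ˣ) * α := FaithfulSMul.algebraMap_injective (𝓞 K) K (by
    rw [map_pow, hz])
  have hsq : I ^ 2 = Ideal.span {y} ^ 2 := by
    rw [hI, Ideal.span_singleton_pow, hy, Ideal.span_singleton_mul_left_unit η⁻¹.isUnit]
  exact ⟨y, pow_left_injective two_ne_zero hsq⟩

lemma IsGenusTrivialSqrt.legendreSym_mul_absNorm_eq_one [Fact p.Prime]
    (hα : IsGenusTrivialSqrt p q s I α) {l : ℕ} [hl : Fact l.Prime] (hdvd : l ∣ 2 * p * q * s)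
    {d μ : ℤ} {D γ : K} (h : IsQuadratic d D φ ψ) (hd : Squarefree d) (hld : (l : ℤ) ∣ d)
    (hφ : φ γ = γ) (hμ : μ = 1 ∨ μ = -1) (hN : γ * ψ γ = (μ * Ideal.absNorm I : ℤ)) :
    legendreSym l (μ * Ideal.absNorm I) = 1 := by
  have hn := hα.not_dvd hl.out hdvd
  refine (h.isQuadNorm hφ (by exact_mod_cast hN)).legendreSym_eq_one hld
    (not_sq_dvd_of_squarefree (Nat.prime_iff_prime_int.1 hl.out) hd) ?_
  rcases hμ with rfl | rfl <;> simpa using hn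

namespace IsAdmissibleField

variable (H : IsAdmissibleField p q s A B C σ τ)
include H

lemma isUnitMulSq_of_prime {l : ℕ} (hl : l.Prime) (h : l ∣ 2 * p * q * s) :
    IsUnitMulSq (l : K) := by
  obtain ⟨hp, hq, -⟩ := H.natCast_ne_zero
  have of_sq {x : K} {η : (𝓞 K)ˣ} (F : K) (h : F ^ 2 = x * (η : 𝓞 K)) : IsUnitMulSq x := by
    refine .of_mul_left (x := ((η : 𝓞 K) : K)) (mul_comm x _ ▸ h ▸ isUnitMulSq_sq F)
      (isUnitMulSq_unit η) (RingOfIntegers.coe_ne_zero_iff.2 η.ne_zero)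
  have isUnitMulSq_p : IsUnitMulSq (p : K) := by
    obtain ⟨F, η, -, -, h⟩ := H.exists_unit_sq_eq_p
    exact of_sq F h
  have isUnitMulSq_q : IsUnitMulSq (q : K) := by
    obtain ⟨F, η, -, -, h⟩ := H.exists_unit_sq_eq_q
    exact of_sq F h
  have isUnitMulSq_s : IsUnitMulSq (s : K) := by
    refine .of_mul_left (x := (p : K)) ?_ isUnitMulSq_p hp
    exact (show B ^ 2 = p * s by simpa using H.quadratic_B.sq_eq) ▸ isUnitMulSq_sq B
  have isUnitMulSq_two : IsUnitMulSq (2 : K) := by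
    refine .of_mul_left (x := (p * q : K)) ?_ (isUnitMulSq_p.mul isUnitMulSq_q)
      (mul_ne_zero hp hq)
    exact (show A ^ 2 = p * q * 2 by
      rw [H.quadratic_A.sq_eq]; push_cast; ring) ▸ isUnitMulSq_sq A
  have eq_of_dvd {k : ℕ} (hk : k.Prime) (h : l ∣ k) : l = k :=
    (Nat.prime_dvd_prime_iff_eq hl hk).1 h
  rcases hl.dvd_mul.1 h with h | h
  · rcases hl.dvd_mul.1 h with h | h
    · rcases hl.dvd_mul.1 h with h | h
      · exact eq_of_dvd Nat.prime_two h ▸ mod_cast isUnitMulSq_two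
      · exact eq_of_dvd H.prime_p h ▸ isUnitMulSq_p
    · exact eq_of_dvd H.prime_q h ▸ isUnitMulSq_q
  · exact eq_of_dvd H.prime_s h ▸ isUnitMulSq_s

lemma isUnitMulSq_of_rat_mul_eq_sq (hI : I ^ 2 = Ideal.span {α}) {r : ℚ} {β : K} (hβ : β ≠ 0)
    (h : r * (α : K) = β ^ 2) : IsUnitMulSq (α : K) := by
  have hr : r ≠ 0 := by
    rintro rfl
    exact pow_ne_zero 2 hβ (by simpa using h.symm)
  obtain ⟨m, t, hm, ht, rfl⟩ := exists_squarefree_mul_sq_rat hr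
  have hmK : (m : K) ≠ 0 := Int.cast_ne_zero.2 hm.ne_zero
  have htK : (t : K) ≠ 0 := Rat.cast_ne_zero.2 ht
  have hmα : (m : K) * α = (β / t) ^ 2 := by
    rw [div_pow, ← h]
    push_cast
    field_simp
  have hα : (α : K) ≠ 0 := right_ne_zero_of_mul (hmα ▸ pow_ne_zero 2 (div_ne_zero hβ htK))
  have hsq : IsIdealSq (m : K) := by
    rw [(eq_mul_inv_iff_mul_eq₀ hα).2 hmα]
    exact (isIdealSq_sq _).mul (isIdealSq_of_sq_eq_span hI).inv
  refine .of_mul_left (hmα ▸ isUnitMulSq_sq _) (.intCast (fun l ↦ H.isUnitMulSq_of_prime)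
    hm.ne_zero fun l hl hlm ↦ ?_) hmK
  rcases dvd_of_isIdealSq H.quadratic_A H.quadratic_B hm hsq (Nat.prime_iff_prime_int.1 hl) hlm
    with h | h
  · have h : l ∣ 2 * (2 * p * q) := by exact_mod_cast h
    refine (Nat.Prime.dvd_mul hl).1 h |>.elim (fun h ↦ h.trans ⟨p * q * s, by ring⟩)
      fun h ↦ h.mul_right s
  · have h : l ∣ 2 * (p * s) := by exact_mod_cast h
    exact h.trans ⟨q, by ring⟩

variable [Fact p.Prime] (hα : IsGenusTrivialSqrt p q s I α)
include hα

lemma exists_rat_mul_eq_sq {e₁ e₂ e₃ : ℤ} (he₁ : e₁ = 1 ∨ e₁ = -1) (he₂ : e₂ = 1 ∨ e₂ = -1)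
    (he₃ : e₃ = 1 ∨ e₃ = -1) (h₁ : HasNormClass σ (α : K) e₁) (h₂ : HasNormClass τ (α : K) e₂)
    (h₃ : HasNormClass (σ * τ) (α : K) e₃) : ∃ (r : ℚ) (β : K), β ≠ 0 ∧ r * (α : K) = β ^ 2 := by
  have := Fact.mk H.prime_q
  have := Fact.mk H.prime_s
  have he : e₁ * e₂ * e₃ = 1 := by
    have hdvd {l : ℕ} (hl : l.Prime) : ¬ (l : ℤ) ∣ e₁ * e₂ * e₃ := by
      have := (Nat.prime_iff_prime_int.1 hl).not_dvd_one
      rcases he₁ with rfl | rfl <;> rcases he₂ with rfl | rfl <;> rcases he₃ with rfl | rfl <;>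
        simpa
    have hsq := H.isSquare_of_hasNormClass hα h₁ h₂ h₃ (hdvd H.prime_p) (hdvd Nat.prime_two)
    rcases he₁ with rfl | rfl <;> rcases he₂ with rfl | rfl <;> rcases he₃ with rfl | rfl <;>
      simp at hsq ⊢
  have hn := abs_norm_eq_absNorm_sq hα.sq_eq
  obtain ⟨γ₁, μ₁, hμ₁, hσ, h₁, hN₁⟩ := h₁.exists_mul_map_eq H.quadratic_A he₁ hn
  obtain ⟨γ₂, μ₂, hμ₂, hτ, h₂, hN₂⟩ := h₂.exists_mul_map_eq H.quadratic_B he₂ hn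
  obtain ⟨γ₃, μ₃, hμ₃, hστ, h₃, hN₃⟩ := h₃.exists_mul_map_eq H.quadratic_C he₃ hn
  have hn0 : Ideal.absNorm I ≠ 0 := fun h ↦ hα.not_dvd H.prime_p ⟨2 * q * s, by ring⟩ (by simp [h])
  have hq : q ∣ 2 * p * q * s := ⟨2 * p * s, by ring⟩
  have hs : s ∣ 2 * p * q * s := ⟨2 * p * q, by ring⟩
  have h₁₃ : μ₁ = μ₃ := sign_eq_of_legendreSym H.legendreSym_q_neg_one hμ₁ hμ₃
    (hα.legendreSym_mul_absNorm_eq_one hq H.quadratic_A H.squarefree_two_mul_p_mul_q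
      ⟨2 * p, by ring⟩ hσ hμ₁ hN₁)
    (hα.legendreSym_mul_absNorm_eq_one hq H.quadratic_C H.squarefree_two_mul_q_mul_s
      ⟨2 * s, by ring⟩ hστ hμ₃ hN₃)
  have h₂₃ : μ₂ = μ₃ := sign_eq_of_legendreSym H.legendreSym_s_neg_one hμ₂ hμ₃
    (hα.legendreSym_mul_absNorm_eq_one hs H.quadratic_B H.squarefree_p_mul_s
      ⟨p, by ring⟩ hτ hμ₂ hN₂)
    (hα.legendreSym_mul_absNorm_eq_one hs H.quadratic_C H.squarefree_two_mul_q_mul_s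
      ⟨2 * q, by ring⟩ hστ hμ₃ hN₃)
  rw [h₁₃] at hN₁
  rw [h₂₃] at hN₂
  refine H.quadratic_A.toIsKleinPair.exists_rat_mul_eq_sq_of_norm (N := μ₃ * Ideal.absNorm I) ?_ he
    (RingOfIntegers.coe_ne_zero_iff.2 hα.ne_zero) hσ hτ hστ h₁ h₂ h₃ hN₁ hN₂ hN₃
  exact mul_ne_zero (by rcases hμ₃ with rfl | rfl <;> decide) (Int.natCast_ne_zero.2 hn0)

lemma exists_eq_span : ∃ y : 𝓞 K, I = Ideal.span {y} := by
  obtain ⟨β, e₁, e₂, e₃, hβ, he₁, he₂, he₃, h₁, h₂, h₃⟩ := H.exists_hasNormClass_sign hα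
  obtain ⟨r, x, hx, h⟩ := H.exists_rat_mul_eq_sq hβ he₁ he₂ he₃ h₁ h₂ h₃
  exact exists_eq_span_of_isUnitMulSq hβ.sq_eq (H.isUnitMulSq_of_rat_mul_eq_sq hβ.sq_eq hx h)

end IsAdmissibleField

end PrincipalSquareRoots

section SplitPrimes

lemma exists_legendreSym_eq {l : ℕ} [Fact l.Prime] (hl : l ≠ 2) {e : ℤ} (he : e = 1 ∨ e = -1) :
    ∃ a : ℕ, a.Coprime l ∧ legendreSym l a = e := by
  rcases he with rfl | rfl
  · exact ⟨1, Nat.coprime_one_left l, by simp⟩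
  · obtain ⟨x, hx⟩ := FiniteField.exists_nonsquare (F := ZMod l) (by rwa [ZMod.ringChar_zmod_n])
    refine ⟨x.val, ?_, by simpa [legendreSym.eq_neg_one_iff] using hx⟩
    exact ZMod.val_coe_unit_coprime (Units.mk0 x fun h ↦ hx (h ▸ .zero))

lemma exists_prime_gt_modEq {ι : Type*} [Finite ι] (n : ℕ) {a m : ι → ℕ} (hm : ∀ i, m i ≠ 0)
    (hcop : Pairwise fun i j ↦ (m i).Coprime (m j)) (ha : ∀ i, (a i).Coprime (m i)) :
    ∃ l : ℕ, n < l ∧ l.Prime ∧ ∀ i, l ≡ a i [MOD m i] := by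
  have := Fintype.ofFinite ι
  obtain ⟨k, hk⟩ :=
    Nat.chineseRemainderOfFinset a m Finset.univ (fun i _ ↦ hm i) (hcop.set_pairwise _)
  have hcopk : k.Coprime (∏ i, m i) := Nat.Coprime.prod_right fun i hi ↦ by
    rw [Nat.Coprime, (hk i hi).gcd_eq]
    exact ha i
  obtain ⟨l, hnl, hl, h⟩ := Nat.forall_exists_prime_gt_and_modEq n
    (Finset.prod_ne_zero_iff.2 fun i _ ↦ hm i) hcopk
  exact ⟨l, hnl, hl, fun i ↦ (h.of_dvd (Finset.dvd_prod_of_mem m (Finset.mem_univ i))).trans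
    (hk i (Finset.mem_univ i))⟩

lemma legendreSym_eq_of_modEq {l a b : ℕ} [Fact l.Prime] (h : a ≡ b [MOD l]) :
    legendreSym l a = legendreSym l b := by
  simp only [legendreSym, Int.cast_natCast, (ZMod.natCast_eq_natCast_iff _ _ _).2 h]

lemma exists_prime_gt_legendreSym_eq (n : ℕ) {p q s r : ℕ} [Fact p.Prime] [Fact q.Prime]
    [Fact s.Prime] (hp : p ≠ 2) (hq : q ≠ 2) (hs : s ≠ 2) (hpq : p ≠ q) (hps : p ≠ s)
    (hqs : q ≠ s) (hr : r.Coprime 8) {e f g : ℤ} (he : e = 1 ∨ e = -1) (hf : f = 1 ∨ f = -1)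
    (hg : g = 1 ∨ g = -1) :
    ∃ l : ℕ, n < l ∧ l.Prime ∧ l ≡ r [MOD 8] ∧ legendreSym p l = e ∧ legendreSym q l = f ∧
      legendreSym s l = g := by
  have prime (l : ℕ) [hl : Fact l.Prime] := hl.out
  obtain ⟨a, hap, ha⟩ := exists_legendreSym_eq hp he
  obtain ⟨b, hbq, hb⟩ := exists_legendreSym_eq hq hf
  obtain ⟨c, hcs, hc⟩ := exists_legendreSym_eq hs hg
  have coprime_eight {l : ℕ} [Fact l.Prime] (hl : l ≠ 2) : Nat.Coprime 8 l :=
    .pow_left 3 ((Nat.coprime_primes Nat.prime_two (prime l)).2 hl.symm)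
  have hp8 := coprime_eight hp
  have hq8 := coprime_eight hq
  have hs8 := coprime_eight hs
  have hpq := (Nat.coprime_primes (prime p) (prime q)).2 hpq
  have hps := (Nat.coprime_primes (prime p) (prime s)).2 hps
  have hqs := (Nat.coprime_primes (prime q) (prime s)).2 hqs
  obtain ⟨l, hnl, hl, h⟩ := exists_prime_gt_modEq n (a := ![r, a, b, c]) (m := ![8, p, q, s])
    (by simp [Fin.forall_fin_succ, (prime p).ne_zero, (prime q).ne_zero, (prime s).ne_zero])
    (by
      intro i j hij
      fin_cases i <;> fin_cases j <;>
        first | exact (hij rfl).elim | assumption | exact Nat.Coprime.symm ‹_›)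
    (by simpa [Fin.forall_fin_succ] using ⟨hr, hap, hbq, hcs⟩)
  exact ⟨l, hnl, hl, h 0, ha ▸ legendreSym_eq_of_modEq (h 1), hb ▸ legendreSym_eq_of_modEq (h 2),
    hc ▸ legendreSym_eq_of_modEq (h 3)⟩

variable {K : Type*} [Field K] [NumberField K] {φ ψ : K ≃ₐ[ℚ] K} {a b : ℤ} {A B : K}

lemma IsKleinPair.exists_int_trace (h : IsKleinPair φ ψ) {x : K} (hx : IsIntegral ℤ x) :
    ∃ t : ℤ, x + φ x + ψ x + φ (ψ x) = t := by
  have h_int := ((hx.add (hx.map φ)).add (hx.map ψ)).add ((hx.map ψ).map φ)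
  obtain ⟨r, hr⟩ := h.exists_rat (x + φ x + ψ x + φ (ψ x))
    (by simp only [map_add, h.left_left]; ring)
    (by simp only [map_add, h.comm, h.right_right]; ring)
  obtain ⟨t, rfl⟩ := exists_int_eq_of_isIntegral (K := K) (hr ▸ h_int)
  exact ⟨t, by simpa using hr⟩

/-- The coefficients are the traces of `x`, `A x`, `B x` and `A B x`. -/
lemma exists_four_mul_mul_mul_eq (hA : IsQuadratic a A φ ψ) (hB : IsQuadratic b B ψ φ) {x : K}
    (hx : IsIntegral ℤ x) : ∃ t₀ t₁ t₂ t₃ : ℤ,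
      4 * a * b * x = a * b * t₀ + b * t₁ * A + a * t₂ * B + t₃ * A * B := by
  obtain ⟨t₀, h₀⟩ := hA.exists_int_trace hx
  obtain ⟨t₁, h₁⟩ := hA.exists_int_trace (hA.isIntegral.mul hx)
  obtain ⟨t₂, h₂⟩ := hA.exists_int_trace (hB.isIntegral.mul hx)
  obtain ⟨t₃, h₃⟩ := hA.exists_int_trace ((hA.isIntegral.mul hB.isIntegral).mul hx)
  refine ⟨t₀, t₁, t₂, t₃, ?_⟩
  simp only [map_mul, map_neg, hA.map_left, hA.map_right, hB.map_left, hB.map_right] at h₁ h₂ h₃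
  rw [← h₀, ← h₁, ← h₂, ← h₃, ← hA.sq_eq, ← hB.sq_eq]
  ring

lemma mem_intCast_range_of_sq_eq {R : Type*} [CommRing R] [IsDomain R] {l : ℕ} [CharP R l] {x : R}
    {d : ℤ} (hx : x ^ 2 = d) (hd : IsSquare (d : ZMod l)) : x ∈ (Int.castRingHom R).range := by
  obtain ⟨y, hy⟩ := hd
  obtain ⟨z, rfl⟩ := ZMod.intCast_surjective y
  have hz : x ^ 2 = (z : R) ^ 2 := by
    rw [hx]
    have h := (ZMod.intCast_eq_intCast_iff d (z ^ 2) l).1 (by rw [hy, Int.cast_pow, sq])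
    rw [(CharP.intCast_eq_intCast R l).2 h, Int.cast_pow]
  rcases sq_eq_sq_iff_eq_or_eq_neg.1 hz with rfl | rfl
  · exact ⟨z, rfl⟩
  · exact ⟨-z, by simp⟩

lemma not_dvd_of_legendreSym_eq_one {l : ℕ} [Fact l.Prime] {d : ℤ} (h : legendreSym l d = 1) :
    ¬ (l : ℤ) ∣ d := by
  rw [← ZMod.intCast_zmod_eq_zero_iff_dvd, ← legendreSym.eq_zero_iff, h]
  exact one_ne_zero

lemma isSquare_of_legendreSym_eq_one {l : ℕ} [Fact l.Prime] {d : ℤ} (h : legendreSym l d = 1) :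
    IsSquare (d : ZMod l) :=
  (legendreSym.eq_one_iff l fun hd ↦ not_dvd_of_legendreSym_eq_one h
    ((ZMod.intCast_zmod_eq_zero_iff_dvd d l).1 hd)).1 h

lemma absNorm_eq_of_forall_mem_intCast_range {P : Ideal (𝓞 K)} {l : ℕ} [CharP (𝓞 K ⧸ P) l]
    (h : ∀ y : 𝓞 K ⧸ P, y ∈ (Int.castRingHom (𝓞 K ⧸ P)).range) : Ideal.absNorm P = l := by
  have hbij : Function.Bijective (ZMod.castHom (dvd_refl l) (𝓞 K ⧸ P)) :=
    ⟨ZMod.castHom_injective _, fun y ↦ (h y).imp' (↑) fun z hz ↦ by simpa using hz⟩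
  rw [Ideal.absNorm_apply, Submodule.cardQuot_apply, ← Nat.card_congr (Equiv.ofBijective _ hbij),
    Nat.card_zmod]

lemma exists_isPrime_charP_quotient (K : Type*) [Field K] [NumberField K] (l : ℕ)
    [hl : Fact l.Prime] : ∃ P : Ideal (𝓞 K), P.IsPrime ∧ CharP (𝓞 K ⧸ P) l := by
  have := (Int.ideal_span_isMaximal_of_prime l)
  obtain ⟨P, hP, hlP⟩ := Ideal.exists_maximal_ideal_liesOver_of_isIntegral (S := 𝓞 K)
    (Ideal.span {(l : ℤ)})
  refine ⟨P, hP.isPrime, (CharP.charP_iff_prime_eq_zero hl.out).2 ?_⟩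
  have : algebraMap ℤ (𝓞 K) l ∈ P := (P.mem_of_liesOver (Ideal.span {(l : ℤ)}) _).1
    (Ideal.mem_span_singleton_self _)
  simpa using Ideal.Quotient.eq_zero_iff_mem.2 this

lemma exists_absNorm_eq_of_legendreSym_eq_one (hA : IsQuadratic a A φ ψ)
    (hB : IsQuadratic b B ψ φ) {l : ℕ} [hl : Fact l.Prime] (hl2 : l ≠ 2)
    (ha : legendreSym l a = 1) (hb : legendreSym l b = 1) :
    ∃ P : Ideal (𝓞 K), Ideal.absNorm P = l := by
  obtain ⟨P, hP, hPl⟩ := exists_isPrime_charP_quotient K l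
  refine ⟨P, absNorm_eq_of_forall_mem_intCast_range fun y ↦ ?_⟩
  obtain ⟨x, rfl⟩ := Ideal.Quotient.mk_surjective y
  set S := (Int.castRingHom (𝓞 K ⧸ P)).range
  have int_mem (z : ℤ) : (z : 𝓞 K ⧸ P) ∈ S := ⟨z, rfl⟩
  have sqrt_mem {d : ℤ} {φ ψ : K ≃ₐ[ℚ] K} {D : K} (h : IsQuadratic d D φ ψ)
      (hd : legendreSym l d = 1) : ∃ D' : 𝓞 K, D' = D ∧ Ideal.Quotient.mk P D' ∈ S := by
    obtain ⟨D', rfl⟩ : ∃ D' : 𝓞 K, D' = D := ⟨⟨D, h.isIntegral⟩, rfl⟩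
    have hsq : D' ^ 2 = d := by
      apply RingOfIntegers.ext
      rw [RingOfIntegers.coe_eq_algebraMap, map_pow, ← RingOfIntegers.coe_eq_algebraMap, h.sq_eq]
      simp
    exact ⟨D', rfl, mem_intCast_range_of_sq_eq (l := l)
      (by rw [← map_pow, hsq, map_intCast]) (isSquare_of_legendreSym_eq_one hd)⟩
  obtain ⟨A', rfl, hA'⟩ := sqrt_mem hA ha
  obtain ⟨B', rfl, hB'⟩ := sqrt_mem hB hb
  obtain ⟨t₀, t₁, t₂, t₃, h⟩ := exists_four_mul_mul_mul_eq hA hB x.isIntegral_coe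
  have h : 4 * a * b * x = a * b * t₀ + b * t₁ * A' + a * t₂ * B' + t₃ * A' * B' :=
    RingOfIntegers.ext (by simpa [map_ofNat] using h)
  have hl' : Prime (l : ℤ) := Nat.prime_iff_prime_int.1 hl.out
  have hl4 : ¬ (l : ℤ) ∣ 4 := fun h ↦ hl2 <| (Nat.prime_dvd_prime_iff_eq hl.out Nat.prime_two).1 <|
    hl.out.dvd_of_dvd_pow (n := 2) (by exact_mod_cast h)
  obtain ⟨c, k, hc⟩ := hl'.coprime_iff_not_dvd.2 <| hl'.not_dvd_mul
    (hl'.not_dvd_mul hl4 (not_dvd_of_legendreSym_eq_one ha)) (not_dvd_of_legendreSym_eq_one hb)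
  have hx : Ideal.Quotient.mk P x = k * Ideal.Quotient.mk P (4 * a * b * x) := by
    have := congrArg (Int.cast : ℤ → 𝓞 K ⧸ P) hc
    push_cast [CharP.cast_eq_zero] at this
    simp only [map_mul, map_intCast, map_ofNat]
    linear_combination -Ideal.Quotient.mk P x * this
  rw [hx, h]
  simp only [map_add, map_mul, map_intCast]
  apply_rules [S.add_mem, S.mul_mem]

end SplitPrimes

section GenusCharacters

variable {K : Type*} [Field K] [NumberField K] {p q s : ℕ} {σ τ : K ≃ₐ[ℚ] K} {A B C : K}

/-- The pair of genus characters `((· / p), (2 / ·))`. Evaluated at the norms of ideals prime to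
`2pqs`, it detects the classes modulo squares. -/
def genusChar (p : ℕ) [Fact p.Prime] : ℕ →* ℤ × ℤ :=
  (((legendreSym.hom p : ℤ →* ℤ).comp (Int.ofNatHom : ℕ →* ℤ))).prod
    ((ZMod.χ₈ : ZMod 8 →* ℤ).comp (Nat.castRingHom (ZMod 8) : ℕ →* ZMod 8))

lemma genusChar_apply (p n : ℕ) [Fact p.Prime] :
    genusChar p n = (legendreSym p n, ZMod.χ₈ n) := rfl

lemma genusChar_eq_one_iff {p n : ℕ} [Fact p.Prime] :
    genusChar p n = 1 ↔ legendreSym p n = 1 ∧ (n % 8 = 1 ∨ n % 8 = 7) := by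
  rw [genusChar_apply, Prod.mk_eq_one, ZMod.χ₈_nat_eq_if_mod_eight]
  split_ifs <;> simp <;> omega

lemma exists_sign_norm_eq (x : 𝓞 K) : ∃ e : ℤ, (e = 1 ∨ e = -1) ∧
    Algebra.norm ℚ (x : K) = (e * Ideal.absNorm (Ideal.span {x}) : ℤ) := by
  rw [← Algebra.coe_norm_int, Ideal.absNorm_span_singleton]
  rcases Int.natAbs_eq (Algebra.norm ℤ x) with h | h
  · exact ⟨1, .inl rfl, by rw [one_mul, ← h]⟩
  · exact ⟨-1, .inr rfl, by rw [neg_one_mul, ← h]⟩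

namespace IsAdmissibleField

variable (H : IsAdmissibleField p q s A B C σ τ) [Fact p.Prime]
include H

lemma genusChar_absNorm_span_eq_one {x : 𝓞 K}
    (hx : (Ideal.absNorm (Ideal.span {x})).Coprime (2 * p * q * s)) :
    genusChar p (Ideal.absNorm (Ideal.span {x})) = 1 := by
  obtain ⟨e, he, hN⟩ := exists_sign_norm_eq x
  generalize Ideal.absNorm (Ideal.span {x}) = n at *
  have not_dvd {l : ℕ} (hl : l.Prime) (hdvd : l ∣ 2 * p * q * s) : ¬ l ∣ n :=
    fun h ↦ hl.not_dvd_one (hx ▸ Nat.dvd_gcd h hdvd)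
  have hp := not_dvd H.prime_p ⟨2 * q * s, by ring⟩
  have h2 := not_dvd Nat.prime_two ⟨p * q * s, by ring⟩
  refine genusChar_eq_one_iff.2 ⟨?_, ?_⟩
  · have := (hN ▸ H.quadratic_A.isQuadNorm_norm (x : K)).legendreSym_eq_one (l := p)
      ⟨2 * q, by ring⟩ (not_sq_dvd_of_squarefree (Nat.prime_iff_prime_int.1 H.prime_p)
        H.squarefree_two_mul_p_mul_q)
      (by rcases he with rfl | rfl <;> simpa [Int.natCast_dvd_natCast])
    rcases he with rfl | rfl
    · simpa using this
    · rwa [legendreSym.mul, H.legendreSym_p_neg_one, one_mul] at this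
  · have := (hN ▸ H.quadratic_C.isQuadNorm_norm (x : K)).emod_eight H.two_mul_q_mul_s_emod_eight
      (by rcases he with rfl | rfl <;> simpa [← even_iff_two_dvd] using h2)
    rcases he with rfl | rfl <;> omega

lemma mk0_eq_one_of_genusChar_eq_one {I : (Ideal (𝓞 K))⁰}
    (hI : (Ideal.absNorm (I : Ideal (𝓞 K))).Coprime (2 * p * q * s))
    (hχ : genusChar p (Ideal.absNorm (I : Ideal (𝓞 K))) = 1)
    (hsq : ClassGroup.mk0 I ^ 2 = 1) : ClassGroup.mk0 I = 1 := by
  have hI0 : (I : Ideal (𝓞 K)) ≠ 0 := nonZeroDivisors.coe_ne_zero I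
  obtain ⟨hl, h8⟩ := genusChar_eq_one_iff.1 hχ
  have hI2 : I ^ 2 = ⟨(I : Ideal (𝓞 K)) ^ 2, pow_mem I.2 2⟩ := rfl
  rw [← map_pow, hI2, ClassGroup.mk0_eq_one_iff] at hsq
  obtain ⟨α, hα⟩ := hsq
  replace hα : (I : Ideal (𝓞 K)) ^ 2 = Ideal.span {α} := hα
  have hα0 : α ≠ 0 := by
    rintro rfl
    exact pow_ne_zero 2 hI0 (by simpa using hα)
  exact (ClassGroup.mk0_eq_one_iff I.2).2 ⟨H.exists_eq_span ⟨hα0, hα, hI, hl, h8⟩⟩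

/-- The ideal is a prime above a rational prime splitting completely in `K`. -/
lemma exists_genusChar_absNorm_eq {e f : ℤ} (he : e = 1 ∨ e = -1) (hf : f = 1 ∨ f = -1) :
    ∃ I : (Ideal (𝓞 K))⁰, (Ideal.absNorm (I : Ideal (𝓞 K))).Coprime (2 * p * q * s) ∧
      genusChar p (Ideal.absNorm (I : Ideal (𝓞 K))) = (e, f) := by
  have := Fact.mk H.prime_q
  have := Fact.mk H.prime_s
  obtain ⟨r, hr, hr4, hrf⟩ : ∃ r : ℕ, r.Coprime 8 ∧ r % 4 = 1 ∧ ZMod.χ₈ r = f := by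
    rcases hf with rfl | rfl
    · exact ⟨1, by decide, by decide, by decide⟩
    · exact ⟨5, by decide, by decide, by decide⟩
  have he2 : e * e = 1 := by rcases he with rfl | rfl <;> rfl
  have hf2 : f * f = 1 := by rcases hf with rfl | rfl <;> rfl
  have hm : 2 * p * q * s ≠ 0 := by
    simp [H.prime_p.ne_zero, H.prime_q.ne_zero, H.prime_s.ne_zero]
  obtain ⟨l, hml, hl, hlr, hpl, hql, hsl⟩ := exists_prime_gt_legendreSym_eq (2 * p * q * s)
    H.p_ne_two H.q_ne_two H.s_ne_two H.p_ne_q H.p_ne_s H.q_ne_s hr he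
    (f := e * f) (by rcases he with rfl | rfl <;> rcases hf with rfl | rfl <;> simp) he
  have := Fact.mk hl
  have hl4 : l % 4 = 1 := (hlr.of_dvd (by decide : 4 ∣ 8)).trans (show r ≡ 1 [MOD 4] from hr4)
  have hl2 : l ≠ 2 := by omega
  have hχ : ZMod.χ₈ l = f := by rw [(ZMod.natCast_eq_natCast_iff _ _ _).2 hlr, hrf]
  have reciprocity {k : ℕ} [Fact k.Prime] (hk : k ≠ 2) : legendreSym k l = legendreSym l k :=
    legendreSym.quadratic_reciprocity_one_mod_four hl4 hk
  obtain ⟨P, hP⟩ := exists_absNorm_eq_of_legendreSym_eq_one H.quadratic_A H.quadratic_B hl2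
    (by rw [legendreSym.mul, legendreSym.mul, legendreSym.at_two hl2, hχ,
          ← reciprocity H.p_ne_two, ← reciprocity H.q_ne_two, hpl, hql]
        linear_combination f * f * he2 + hf2)
    (by rw [legendreSym.mul, ← reciprocity H.p_ne_two, ← reciprocity H.s_ne_two, hpl, hsl, he2])
  have hP0 : P ≠ 0 := by
    rintro rfl
    exact hl.ne_zero (by simpa using hP.symm)
  exact ⟨⟨P, mem_nonZeroDivisors_of_ne_zero hP0⟩, hP ▸ Nat.coprime_of_lt_prime hm hml hl,
    by rw [hP, genusChar_apply, hpl, hχ]⟩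

lemma nonempty_sylow_two_classGroup_mulEquiv (P : Sylow 2 (ClassGroup (𝓞 K))) :
    Nonempty ((P : Subgroup (ClassGroup (𝓞 K))) ≃*
      Multiplicative (ZMod 2) × Multiplicative (ZMod 2)) := by
  have hm : 2 * p * q * s ≠ 0 := by
    simp [H.prime_p.ne_zero, H.prime_q.ne_zero, H.prime_s.ne_zero]
  obtain ⟨χ, hχ⟩ := exists_classGroup_hom_eq_absNorm hm (genusChar p)
    fun x ↦ H.genusChar_absNorm_span_eq_one (x := x)
  have sq_eq_one (u : (ℤ × ℤ)ˣ) : u ^ 2 = 1 :=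
    MulEquiv.prodUnits.injective (Prod.ext (by simp [Int.units_sq]) (by simp [Int.units_sq]))
  have surjective : Function.Surjective χ.toHomUnits := fun u ↦ by
    obtain ⟨h1, h2⟩ := Prod.isUnit_iff.1 u.isUnit
    obtain ⟨I, hI, hIu⟩ :=
      H.exists_genusChar_absNorm_eq (Int.isUnit_iff.1 h1) (Int.isUnit_iff.1 h2)
    exact ⟨ClassGroup.mk0 I, Units.ext ((hχ I hI).trans hIu)⟩
  have eq_one (c : ClassGroup (𝓞 K)) (hc : c ^ 2 = 1) (hχc : χ.toHomUnits c = 1) : c = 1 := by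
    obtain ⟨I, rfl, hI⟩ := exists_mk0_eq_and_absNorm_coprime c hm
    exact H.mk0_eq_one_of_genusChar_eq_one hI ((hχ I hI).symm.trans (congrArg Units.val hχc)) hc
  obtain ⟨E⟩ := nonempty_sylow_two_mulEquiv sq_eq_one χ.toHomUnits surjective eq_one P
  let F : ℤˣ ≃* Multiplicative (ZMod 2) := mulEquivOfPrimeCardEq (p := 2) (by simp) (by simp)
  exact ⟨(E.trans MulEquiv.prodUnits).trans (F.prodCongr F)⟩

end IsAdmissibleField

end GenusCharacters

section BiquadraticExtension

open IntermediateField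

variable {K : Type*} [Field K] [NumberField K] {σ τ : K ≃ₐ[ℚ] K} {a b c d : ℤ} {A B D : K}

open Polynomial in
lemma splits_minpoly_of_sq_eq (hD : D ^ 2 = d) :
    ((minpoly ℚ D).map (algebraMap ℚ K)).Splits := by
  have hroot : aeval D (X ^ 2 - C (d : ℚ)) = 0 := by simp [hD]
  have hfactor : (X ^ 2 - C (d : ℚ)).map (algebraMap ℚ K) = (X - C D) * (X - C (-D)) := by
    have hmap : (C (d : ℚ)).map (algebraMap ℚ K) = C D ^ 2 := by
      rw [map_C, map_intCast, ← hD, C_pow]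
    rw [Polynomial.map_sub, Polynomial.map_pow, map_X, hmap, C_neg]
    ring
  exact Splits.of_dvd ((Splits.X_sub_C D).mul (Splits.X_sub_C (-D)))
    (mul_ne_zero (X_sub_C_ne_zero _) (X_sub_C_ne_zero _))
    (hfactor ▸ Polynomial.map_dvd (algebraMap ℚ K) (minpoly.dvd ℚ D hroot))

lemma isGalois_of_adjoin_eq_top {S : Set K} (htop : adjoin ℚ S = ⊤)
    (hS : ∀ x ∈ S, ∃ d : ℤ, x ^ 2 = d) : IsGalois ℚ K := by
  have : Normal ℚ K := normal_iff.2 fun x ↦ ⟨Algebra.IsIntegral.isIntegral x,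
    splits_of_mem_adjoin ℚ K (S := S) (fun y hy ↦ ⟨Algebra.IsIntegral.isIntegral y,
      splits_minpoly_of_sq_eq (hS y hy).choose_spec⟩) (htop ▸ mem_top)⟩
  exact ⟨⟩

lemma algEquiv_ext_of_adjoin_eq_top (htop : adjoin ℚ {A, B} = ⊤) {f g : K ≃ₐ[ℚ] K}
    (hA : f A = g A) (hB : f B = g B) : f = g := by
  refine AlgEquiv.ext fun x ↦ ?_
  induction (htop ▸ mem_top : x ∈ adjoin ℚ {A, B}) using adjoin_induction with
  | mem x hx => obtain rfl | rfl := hx; exacts [hA, hB]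
  | algebraMap r => simp
  | add x y _ _ hx hy => simp [hx, hy]
  | inv x _ hx => simp [hx]
  | mul x y _ _ hx hy => simp [hx, hy]

lemma map_eq_or_eq_neg (hD : D ^ 2 = d) (f : K ≃ₐ[ℚ] K) : f D = D ∨ f D = -D :=
  sq_eq_sq_iff_eq_or_eq_neg.1 (by rw [← map_pow, hD, map_intCast])

lemma eq_one_or_eq_or_eq_or_eq_mul_of_adjoin_eq_top (htop : adjoin ℚ {A, B} = ⊤)
    (hA : A ^ 2 = a) (hB : B ^ 2 = b) (hσA : σ A = A) (hσB : σ B = -B) (hτA : τ A = -A)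
    (hτB : τ B = B) (f : K ≃ₐ[ℚ] K) : f = 1 ∨ f = σ ∨ f = τ ∨ f = σ * τ := by
  have eq_of_map {g : K ≃ₐ[ℚ] K} : f A = g A → f B = g B → f = g :=
    algEquiv_ext_of_adjoin_eq_top htop
  rcases map_eq_or_eq_neg hA f with hfA | hfA <;> rcases map_eq_or_eq_neg hB f with hfB | hfB
  · exact .inl (eq_of_map (by simp [hfA]) (by simp [hfB]))
  · exact .inr (.inl (eq_of_map (by simp [hfA, hσA]) (by simp [hfB, hσB])))
  · exact .inr (.inr (.inl (eq_of_map (by simp [hfA, hτA]) (by simp [hfB, hτB]))))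
  · exact .inr (.inr (.inr (eq_of_map (by simp [hfA, hσA, hτA]) (by simp [hfB, hσB, hτB]))))

section Galois

variable [IsGalois ℚ K]

lemma exists_map_eq_neg (hD : D ^ 2 = d) (hd : ¬ IsSquare (d : ℚ)) :
    ∃ f : K ≃ₐ[ℚ] K, f D = -D := by
  by_contra! h
  obtain ⟨r, rfl⟩ := mem_bot.1 <| (IsGalois.mem_bot_iff_fixed D).2
    fun f ↦ (map_eq_or_eq_neg hD f).resolve_right (h f)
  exact hd ⟨r, by rw [eq_ratCast] at hD; exact_mod_cast (sq (r : K) ▸ hD).symm⟩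

lemma exists_map_eq_and_map_eq_neg (hA : A ^ 2 = a) (hB : B ^ 2 = b)
    (hb : ¬ IsSquare (b : ℚ)) (hab : ¬ IsSquare ((a * b : ℤ) : ℚ)) :
    ∃ f : K ≃ₐ[ℚ] K, f A = A ∧ f B = -B := by
  have hA0 : A ≠ 0 := by
    rintro rfl
    exact hab ⟨0, by simpa using .inl (by simpa using hA.symm)⟩
  obtain ⟨f, hf⟩ := exists_map_eq_neg hB hb
  obtain ⟨g, hg⟩ := exists_map_eq_neg (D := A * B) (by rw [mul_pow, hA, hB, Int.cast_mul]) hab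
  rw [map_mul] at hg
  rcases map_eq_or_eq_neg hA g with hgA | hgA
  · exact ⟨g, hgA, mul_left_cancel₀ hA0 (by rw [mul_neg, ← hg, hgA])⟩
  have hgB : g B = B := mul_left_cancel₀ hA0 (by rw [hgA] at hg; linear_combination -hg)
  rcases map_eq_or_eq_neg hA f with hfA | hfA
  · exact ⟨f, hfA, hf⟩
  · exact ⟨f * g, by simp [hgA, hfA], by simp [hgB, hf]⟩

lemma isKleinPair_of_adjoin_eq_top (htop : adjoin ℚ {A, B} = ⊤) (hA : A ^ 2 = a) (hB : B ^ 2 = b)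
    (hA0 : A ≠ 0) (hB0 : B ≠ 0) (hσA : σ A = A) (hσB : σ B = -B) (hτA : τ A = -A) (hτB : τ B = B) :
    IsKleinPair σ τ := by
  have eq_of_map {f g : K ≃ₐ[ℚ] K} : f A = g A → f B = g B → f = g :=
    algEquiv_ext_of_adjoin_eq_top htop
  have eq_or (f : K ≃ₐ[ℚ] K) : f = 1 ∨ f = σ ∨ f = τ ∨ f = σ * τ :=
    eq_one_or_eq_or_eq_or_eq_mul_of_adjoin_eq_top htop hA hB hσA hσB hτA hτB f
  have ne_of_map_eq_neg {f g : K ≃ₐ[ℚ] K} {x : K} (hx : x ≠ 0) (h : f x = -x) (h' : g x = x) :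
      g ≠ f := by
    rintro rfl
    exact hx (self_eq_neg.1 (h'.symm.trans h))
  have one_ne_sigma : 1 ≠ σ := ne_of_map_eq_neg hB0 hσB rfl
  have one_ne_tau : 1 ≠ τ := ne_of_map_eq_neg hA0 hτA rfl
  have sigma_ne_tau : σ ≠ τ := ne_of_map_eq_neg hA0 hτA hσA
  have one_ne_mul : 1 ≠ σ * τ := ne_of_map_eq_neg hA0 (by simp [hσA, hτA]) rfl
  have sigma_sq : σ * σ = 1 := eq_of_map (by simp [hσA]) (by simp [hσB])
  have tau_sq : τ * τ = 1 := eq_of_map (by simp [hτA]) (by simp [hτB])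
  have comm : σ * τ = τ * σ := eq_of_map (by simp [hσA, hτA]) (by simp [hσB, hτB])
  refine ⟨DFunLike.congr_fun sigma_sq, DFunLike.congr_fun tau_sq, DFunLike.congr_fun comm,
    fun x hσ hτ ↦ ?_, fun x ↦ ?_⟩
  · obtain ⟨r, hr⟩ := mem_bot.1 <| (IsGalois.mem_bot_iff_fixed x).2 fun f ↦ by
      rcases eq_or f with rfl | rfl | rfl | rfl <;> simp [hσ, hτ]
    exact ⟨r, by rw [← hr, eq_ratCast]⟩
  · classical
    have huniv : (Finset.univ : Finset (K ≃ₐ[ℚ] K)) = {1, σ, τ, σ * τ} := by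
      ext f
      simpa using eq_or f
    rw [← eq_ratCast (algebraMap ℚ K), Algebra.norm_eq_prod_automorphisms, huniv,
      Finset.prod_insert, Finset.prod_insert, Finset.prod_insert, Finset.prod_singleton, comm]
    · simp only [AlgEquiv.mul_apply, AlgEquiv.one_apply, map_mul]
      ring
    all_goals simp [one_ne_sigma.symm, one_ne_tau.symm, one_ne_sigma, one_ne_tau, one_ne_mul,
      sigma_ne_tau]

end Galois

lemma IsKleinPair.symm (h : IsKleinPair σ τ) : IsKleinPair τ σ where
  left_left := h.right_right
  right_right := h.left_left
  comm x := (h.comm x).symm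
  exists_rat x hτ hσ := h.exists_rat x hσ hτ
  norm_eq x := by
    rw [h.norm_eq, map_mul, map_mul, h.comm]
    ring

lemma exists_isQuadratic_of_adjoin_eq_top (htop : adjoin ℚ {A, B} = ⊤) (hA : A ^ 2 = a)
    (hB : B ^ 2 = b) (ha : ¬ IsSquare (a : ℚ)) (hb : ¬ IsSquare (b : ℚ))
    (hab : ¬ IsSquare ((a * b : ℤ) : ℚ)) :
    ∃ σ τ : K ≃ₐ[ℚ] K, IsQuadratic a A σ τ ∧ IsQuadratic b B τ σ := by
  have : IsGalois ℚ K := isGalois_of_adjoin_eq_top htop <| by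
    rintro x (rfl | rfl)
    exacts [⟨a, hA⟩, ⟨b, hB⟩]
  have hA0 : A ≠ 0 := by
    rintro rfl
    exact ha ⟨0, by simpa using hA.symm⟩
  have hB0 : B ≠ 0 := by
    rintro rfl
    exact hb ⟨0, by simpa using hB.symm⟩
  obtain ⟨σ, hσA, hσB⟩ := exists_map_eq_and_map_eq_neg hA hB hb hab
  obtain ⟨τ, hτB, hτA⟩ := exists_map_eq_and_map_eq_neg hB hA ha (mul_comm a b ▸ hab)
  have h := isKleinPair_of_adjoin_eq_top htop hA hB hA0 hB0 hσA hσB hτA hτB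
  exact ⟨σ, τ, ⟨h, hA, hA0, hσA, hτA⟩, ⟨h.symm, hB, hB0, hτB, hσB⟩⟩

end BiquadraticExtension

section FieldK

open IntermediateField

lemma IsAdmissible.exists_isAdmissibleField {K : Type*} [Field K] [NumberField K] {p q s : ℕ}
    {A B : K} (h : IsAdmissible p q s) [Fact p.Prime] [Fact q.Prime] [Fact s.Prime]
    (htop : adjoin ℚ {A, B} = ⊤) (hA : A ^ 2 = 2 * p * q) (hB : B ^ 2 = p * s) :
    ∃ (C : K) (σ τ : K ≃ₐ[ℚ] K), IsAdmissibleField p q s A B C σ τ := by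
  have hp : p.Prime := Fact.out
  have hq : q.Prime := Fact.out
  have hs : s.Prime := Fact.out
  have not_isSquare {l n : ℕ} (hl : l.Prime) (hn : Squarefree n) (hln : l ∣ n) :
      ¬ IsSquare ((n : ℤ) : ℚ) :=
    not_isSquare_ratCast (Nat.prime_iff_prime_int.1 hl) (Int.natCast_dvd_natCast.2 hln)
      (not_sq_dvd_of_squarefree (Nat.prime_iff_prime_int.1 hl) (Int.squarefree_natCast.2 hn))
  have hpq := not_isSquare Nat.prime_two
    (squarefree_two_mul_prime_mul_prime hp hq h.p_ne_q h.p_ne_two h.q_ne_two) ⟨p * q, rfl⟩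
  have hps := not_isSquare hp (squarefree_prime_mul_prime hp hs h.p_ne_s) ⟨s, rfl⟩
  have hqs := not_isSquare Nat.prime_two
    (squarefree_two_mul_prime_mul_prime hq hs h.q_ne_s h.q_ne_two h.s_ne_two) ⟨q * s, rfl⟩
  have hp0 : (p : ℤ) ≠ 0 := by exact_mod_cast hp.ne_zero
  have hmul : (2 * p * q : ℤ) * (p * s) = 2 * q * s * p ^ 2 := by ring
  have hmul_not_isSquare : ¬ IsSquare ((2 * p * q * (p * s) : ℤ) : ℚ) := fun hsq ↦ hqs <| by
    rw [hmul, Int.cast_mul] at hsq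
    have := hsq.div (.sq (p : ℚ))
    rwa [Int.cast_pow, Int.cast_natCast, mul_div_cancel_right₀ _
      (pow_ne_zero 2 (by exact_mod_cast hp0)), mul_assoc] at this
  obtain ⟨σ, τ, hσ, hτ⟩ := exists_isQuadratic_of_adjoin_eq_top (a := 2 * p * q) (b := p * s) htop
    (by exact_mod_cast hA) (by exact_mod_cast hB) (by simpa [mul_assoc] using hpq)
    (by simpa using hps) hmul_not_isSquare
  exact ⟨_, σ, τ, h, hp, hq, hs, hσ, hτ, hσ.mul hτ hp0 hmul⟩

lemma ofReal_sqrt_sq {x : ℝ} (hx : 0 ≤ x) : ((√x : ℝ) : ℂ) ^ 2 = (x : ℂ) := by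
  rw [← Complex.ofReal_pow, Real.sq_sqrt hx]

lemma numberField_fieldK (p q s : ℕ) : NumberField (fieldK p q s) where
  to_finiteDimensional := by
    have := (Set.toFinite {((√(2 * p * q) : ℝ) : ℂ), ((√(p * s) : ℝ) : ℂ)}).to_subtype
    refine finiteDimensional_adjoin ?_
    rintro x (rfl | rfl) <;> refine .of_pow two_pos ?_ <;> rw [ofReal_sqrt_sq (by positivity)]
    · exact_mod_cast isIntegral_natCast (R := ℚ) (B := ℂ) (a := 2 * p * q)
    · exact_mod_cast isIntegral_natCast (R := ℚ) (B := ℂ) (a := p * s)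

lemma adjoin_pair_eq_top {F E : Type*} [Field F] [Field E] [Algebra F E] {x y : E}
    (hx : x ∈ adjoin F {x, y}) (hy : y ∈ adjoin F {x, y}) :
    adjoin F {(⟨x, hx⟩ : adjoin F {x, y}), ⟨y, hy⟩} = ⊤ :=
  lift_injective _ (by rw [lift_adjoin, lift_top, Set.image_pair])

lemma exists_adjoin_eq_top_fieldK (p q s : ℕ) : ∃ A B : fieldK p q s,
    adjoin ℚ {A, B} = ⊤ ∧ A ^ 2 = 2 * p * q ∧ B ^ 2 = p * s := by
  have hA : ((√(2 * p * q) : ℝ) : ℂ) ∈ fieldK p q s := subset_adjoin _ _ (.inl rfl)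
  have hB : ((√(p * s) : ℝ) : ℂ) ∈ fieldK p q s := subset_adjoin _ _ (.inr rfl)
  refine ⟨⟨_, hA⟩, ⟨_, hB⟩, ?_, ?_, ?_⟩
  · convert! adjoin_pair_eq_top hA hB
  all_goals
    refine Subtype.ext ((ofReal_sqrt_sq (by positivity)).trans ?_)
    push_cast
    rfl

end FieldK

end BiquadraticTwoClass

theorem two_class_group_of_K
    (p q s : ℕ) (hp : p.Prime) (hq : q.Prime) (hs : s.Prime)
    (hpq : p ≠ q) (hps : p ≠ s) (hqs : q ≠ s)
    (hp8 : p % 8 = 5) (hq8 : q % 8 = 3) (hs4 : s % 4 = 3)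
    (hQRq : IsSquare (p : ZMod q)) (hQRs : IsSquare (p : ZMod s)) :
    ∀ P : Sylow 2 (ClassGroup (𝓞 (fieldK p q s))),
      Nonempty ((P : Subgroup (ClassGroup (𝓞 (fieldK p q s)))) ≃*
        (Multiplicative (ZMod 2) × Multiplicative (ZMod 2))) := by
  have := Fact.mk hp
  have := Fact.mk hq
  have := Fact.mk hs
  have := BiquadraticTwoClass.numberField_fieldK p q s
  have h : BiquadraticTwoClass.IsAdmissible p q s := ⟨hqs, hp8, hq8, hs4, hQRq, hQRs⟩
  obtain ⟨A, B, htop, hA, hB⟩ := BiquadraticTwoClass.exists_adjoin_eq_top_fieldK p q s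
  obtain ⟨C, σ, τ, H⟩ := h.exists_isAdmissibleField htop hA hB
  exact H.nonempty_sylow_two_classGroup_mulEquiv
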